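/- arXiv:1906.06860 — 6 statements merged into one kernel-verified Lean document; each statement's English description precedes it below -/
import Mathlib

section
/- Let $p,q,r$ be nonzero complex numbers satisfying the local Calabi–Yau condition $\frac1p+\frac1q+\frac1r=0$, and let $k,l$ be positive integers. Set $\lambda=kp$ and $\mu=lp$ (so that automatically $p+q\neq0$ and $\lambda+\mu\neq0$). Then $\sum_{j=1}^{k} j\,\binom{-\lambda/r}{k-j}\binom{-\mu/r}{l+j} \;=\; \frac{1}{p+q}\,\frac{\lambda\mu}{\lambda+\mu}\,\binom{-\lambda/r}{k}\binom{-\mu/r}{l}$. -/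
/-- The generalized binomial coefficient $\binom{z}{k} = z(z-1)\cdots(z-k+1)/k!$. -/
noncomputable def gchoose (z : ℂ) (k : ℕ) : ℂ :=
  (∏ i ∈ Finset.range k, (z - (i : ℂ))) / (Nat.factorial k : ℂ)

theorem gchoose_step (z : ℂ) (n : ℕ) :
    ((n : ℂ) + 1) * gchoose z (n + 1) = (z - n) * gchoose z n := by
  unfold gchoose
  have h1 : (Nat.factorial n : ℂ) ≠ 0 := by exact_mod_cast Nat.factorial_ne_zero n
  have h2 : (n : ℂ) + 1 ≠ 0 := by exact_mod_cast Nat.succ_ne_zero n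
  rw [Finset.prod_range_succ, Nat.factorial_succ]
  push_cast
  field_simp

theorem gchoose_telescope (a b : ℂ) (k l : ℕ) (hab : a * l = b * k) (m : ℕ) (hm : m ≤ k) :
    (a + b) * ∑ j ∈ Finset.range m, (j : ℂ) * gchoose a (k - j) * gchoose b (l + j)
      = (a - k) * l * (gchoose a k * gchoose b l)
        - (a - k + m) * (l + m) * (gchoose a (k - m) * gchoose b (l + m)) := by
  induction m with
  | zero => simp
  | succ m ih =>
    rw [Finset.sum_range_succ, mul_add, ih (by omega)]
    obtain ⟨n, rfl⟩ : ∃ n, k = m + 1 + n := ⟨k - (m + 1), by omega⟩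
    have e1 : m + 1 + n - m = n + 1 := by omega
    have e2 : m + 1 + n - (m + 1) = n := by omega
    rw [e1, e2, ← add_assoc l m 1]
    have s1 := gchoose_step a n
    have s2 := gchoose_step b (l + m)
    push_cast at *
    generalize gchoose a (n + 1) = A at *
    generalize gchoose a n = A' at *
    generalize gchoose b (l + m + 1) = B' at *
    generalize gchoose b (l + m) = B at *
    linear_combination (-(l + m + 1) * B') * s1 + ((n : ℂ) + 1) * A * s2 - A * B * hab

/-- For nonzero complex $p,q,r$ with $1/p+1/q+1/r=0$ and positive integers $k,l$, setting
$\lambda = kp$, $\mu = lp$, one has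
$\sum_{j=1}^{k} j \binom{-\lambda/r}{k-j}\binom{-\mu/r}{l+j}
  = \frac{1}{p+q}\frac{\lambda\mu}{\lambda+\mu}\binom{-\lambda/r}{k}\binom{-\mu/r}{l}$. -/
theorem special_binomial_identity (p q r : ℂ) (hp : p ≠ 0) (hq : q ≠ 0) (hr : r ≠ 0)
    (hCY : 1 / p + 1 / q + 1 / r = 0) (k l : ℕ) (hk : 0 < k) (hl : 0 < l) :
    ∑ j ∈ Finset.Icc 1 k,
        (j : ℂ) * gchoose (-((k : ℂ) * p) / r) (k - j) * gchoose (-((l : ℂ) * p) / r) (l + j)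
      = (1 / (p + q)) * (((k : ℂ) * p) * ((l : ℂ) * p) / ((k : ℂ) * p + (l : ℂ) * p)) *
          gchoose (-((k : ℂ) * p) / r) k * gchoose (-((l : ℂ) * p) / r) l := by
  have hpq : p + q ≠ 0 := by
    intro h
    have h2 : 1 / p + 1 / q = 0 := by field_simp; linear_combination h
    rw [h2, zero_add] at hCY
    exact one_div_ne_zero hr hCY
  have hk' : (k : ℂ) ≠ 0 := by exact_mod_cast hk.ne'
  have hkl : (k : ℂ) + l ≠ 0 := by exact_mod_cast (by omega : k + l ≠ 0)
  have hrr : r = -(p * q) / (p + q) := by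
    field_simp at hCY ⊢
    linear_combination hCY
  have ha : -((k : ℂ) * p) / r = k * ((p + q) / q) := by rw [hrr]; field_simp
  have hb : -((l : ℂ) * p) / r = l * ((p + q) / q) := by rw [hrr]; field_simp
  rw [ha, hb]
  have key := gchoose_telescope (k * ((p + q) / q)) (l * ((p + q) / q)) k l (by ring) k le_rfl
  have hsum : ∑ j ∈ Finset.Icc 1 k, (j : ℂ) * gchoose (k * ((p + q) / q)) (k - j)
        * gchoose (l * ((p + q) / q)) (l + j)
      = ∑ j ∈ Finset.range (k + 1), (j : ℂ) * gchoose (k * ((p + q) / q)) (k - j)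
        * gchoose (l * ((p + q) / q)) (l + j) := by
    apply Finset.sum_subset
    · intro x hx
      simp at hx ⊢
      omega
    · intro x hx hx'
      have : x = 0 := by
        simp at hx hx'
        omega
      simp [this]
  rw [hsum, Finset.sum_range_succ]
  have hne : (k : ℂ) * ((p + q) / q) + l * ((p + q) / q) ≠ 0 := by
    rw [← add_mul]
    exact mul_ne_zero hkl (div_ne_zero hpq hq)
  apply mul_left_cancel₀ hne
  rw [mul_add, key]
  generalize gchoose (k * ((p + q) / q)) (k - k) = A
  generalize gchoose (l * ((p + q) / q)) (l + k) = B
  generalize gchoose (k * ((p + q) / q)) k = C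
  generalize gchoose (l * ((p + q) / q)) l = D
  have hd : (k : ℂ) * p + l * p ≠ 0 := by rw [← add_mul]; exact mul_ne_zero hkl hp
  field_simp
  ring
end

section
/- There exists exactly one formal power series $V\in\mathbb{Q}[[X,E]]$ with zero constant term satisfying the difference equation $\sum_{0\le\alpha_1\le\cdots\le\alpha_m\le n}\exp\big(\sum_{j=1}^{m}S_{\alpha_j m-(j-1/2)n}(V)\big)=\binom{m+n}{m}\,(1+X)$. -/
open MvPowerSeries

/-- The formal exponential of a multivariate power series (with zero constant term):
`fexp V = ∑_{n≥0} V^n / n!`, defined coefficientwise.  For a series `V` with zero constant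
term, `V^n` has order at least `n`, so for a fixed monomial only the terms with
`n ≤ (total degree)` contribute, and the truncated sum below computes the exponential. -/
noncomputable def fexp (V : MvPowerSeries (Fin 2) ℚ) : MvPowerSeries (Fin 2) ℚ :=
  fun d => ∑ n ∈ Finset.range (d 0 + d 1 + 1),
    (Nat.factorial n : ℚ)⁻¹ * MvPowerSeries.coeff d (V ^ n)

/-- The shift `S_c : x ↦ x + cε`, i.e. the continuous `ℚ`-algebra endomorphism of
`ℚ[[X,E]]` with `S_c(X) = X + c·E` and `S_c(E) = E`, described through its action on
coefficients: the coefficient of `X^i E^j` in `S_c V` is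
`∑_{t=0}^{j} C(i+t,t) c^t · (coefficient of X^{i+t} E^{j-t} in V)`. -/
noncomputable def shiftS (c : ℚ) (V : MvPowerSeries (Fin 2) ℚ) : MvPowerSeries (Fin 2) ℚ :=
  fun d => ∑ t ∈ Finset.range (d 1 + 1),
    (Nat.choose (d 0 + t) t : ℚ) * c ^ t *
      MvPowerSeries.coeff (Finsupp.single 0 (d 0 + t) + Finsupp.single 1 (d 1 - t)) V

/-- The difference equation
`∑_{0 ≤ α_1 ≤ ⋯ ≤ α_m ≤ n} exp(∑_{j=1}^m S_{α_j m - (j - 1/2) n}(V)) = C(m+n, m)·(1+X)`,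
where the sum ranges over all monotone integer tuples `0 ≤ α_1 ≤ ⋯ ≤ α_m ≤ n`. -/
def diffEq (m n : ℕ) (V : MvPowerSeries (Fin 2) ℚ) : Prop :=
  ∑ α ∈ Finset.univ.filter
      (fun α : Fin m → Fin (n + 1) => ∀ i j : Fin m, i ≤ j → α i ≤ α j),
    fexp (∑ j : Fin m, shiftS ((α j : ℚ) * m - (((j : ℕ) : ℚ) + 1 / 2) * n) V)
  = (Nat.choose (m + n) m : MvPowerSeries (Fin 2) ℚ) * (1 + MvPowerSeries.X 0)

theorem exUnique_aux {ι β : Type} [LinearOrder β] [WellFoundedLT β] (r : ι → β) (z : ι)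
    (F : (ι → ℚ) → ι → ℚ) (b : ι → ℚ) (κ : ℚ) (hκ : κ ≠ 0)
    (H : ∀ d, d ≠ z → ∀ V W : ι → ℚ, V z = 0 → W z = 0 → (∀ e, r e < r d → V e = W e) →
      F V d - F W d = κ * (V d - W d)) :
    ∃! V : ι → ℚ, V z = 0 ∧ ∀ d, d ≠ z → F V d = b d := by
  classical
  have wf : WellFounded (fun a c : ι => r a < r c) := InvImage.wf r wellFounded_lt
  let step : (d : ι) → ((e : ι) → r e < r d → ℚ) → ℚ := fun d f =>
    if d = z then 0 else
      (b d - F (fun e => if h : r e < r d then (if e = z then 0 else f e h) else 0) d) / κ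
  let V : ι → ℚ := wf.fix step
  have hV : ∀ d, V d = step d (fun e _ => V e) := fun d => wf.fix_eq step d
  have hVz : V z = 0 := by rw [hV]; simp [step]
  refine ⟨V, ⟨hVz, ?_⟩, ?_⟩
  · intro d hd
    have h1 := hV d
    simp only [step, if_neg hd] at h1
    set W : ι → ℚ := fun e => if h : r e < r d then (if e = z then 0 else V e) else 0 with hW
    have hWz : W z = 0 := by simp [hW]
    have hWd : W d = 0 := by simp [hW]
    have h2 := H d hd V W hVz hWz (by
      intro e he
      simp only [hW, dif_pos he]
      split_ifs with h
      · rw [h, hVz]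
      · rfl)
    rw [hWd, h1] at h2
    field_simp at h2
    linarith
  · rintro W ⟨hWz, hW⟩
    funext d
    induction d using wf.induction with
    | _ d ih =>
      by_cases hd : d = z
      · rw [hd, hWz, hVz]
      have h2 := H d hd W V hWz hVz ih
      have h3 : F V d = b d := by
        have h1 := hV d
        simp only [step, if_neg hd] at h1
        set W' : ι → ℚ := fun e => if h : r e < r d then (if e = z then 0 else V e) else 0 with hW'
        have hWz : W' z = 0 := by simp [hW']
        have hWd : W' d = 0 := by simp [hW']
        have h2 := H d hd V W' hVz hWz (by
          intro e he
          simp only [hW', dif_pos he]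
          split_ifs with h
          · rw [h, hVz]
          · rfl)
        rw [hWd, h1] at h2
        field_simp at h2
        linarith
      rw [hW d hd, h3, sub_self] at h2
      rcases mul_eq_zero.1 h2.symm with h | h
      · exact absurd h hκ
      · linarith

theorem coeff_mul_low (D S : MvPowerSeries (Fin 2) ℚ) (d : Fin 2 →₀ ℕ)
    (hD : ∀ e : Fin 2 →₀ ℕ, e 0 + e 1 < d 0 + d 1 → coeff e D = 0) :
    coeff d (D * S) = coeff d D * constantCoeff S := by
  classical
  rw [MvPowerSeries.coeff_mul, Finset.sum_eq_single (d, 0)]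
  · simp
  · rintro ⟨p, q⟩ hpq hne
    rw [Finset.HasAntidiagonal.mem_antidiagonal] at hpq
    simp only at hpq ⊢
    rw [hD p, zero_mul]
    by_contra hlt
    apply hne
    have h0 := DFunLike.congr_fun hpq 0
    have h1 := DFunLike.congr_fun hpq 1
    simp only [Finsupp.add_apply] at h0 h1
    have hq : q = 0 := by
      ext i
      fin_cases i
      · simp; omega
      · simp; omega
    subst hq
    simp at hpq
    simp [hpq]
  · intro h
    simp at h

theorem fexp_sub (U W : MvPowerSeries (Fin 2) ℚ) (hU : constantCoeff U = 0)
    (hW : constantCoeff W = 0) (d : Fin 2 →₀ ℕ) (hd : d ≠ 0)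
    (h : ∀ e : Fin 2 →₀ ℕ, e 0 + e 1 < d 0 + d 1 → coeff e U = coeff e W) :
    coeff d (fexp U) - coeff d (fexp W) = coeff d U - coeff d W := by
  change (∑ n ∈ Finset.range (d 0 + d 1 + 1), (Nat.factorial n : ℚ)⁻¹ * coeff d (U ^ n)) -
    (∑ n ∈ Finset.range (d 0 + d 1 + 1), (Nat.factorial n : ℚ)⁻¹ * coeff d (W ^ n)) = _
  have hpos : 0 < d 0 + d 1 := by
    by_contra hc
    apply hd
    ext i
    fin_cases i
    · simp; omega
    · simp; omega
  rw [← Finset.sum_sub_distrib, Finset.sum_eq_single 1]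
  · simp
  · intro k _ hk
    rw [← mul_sub, ← map_sub, ← (Commute.all U W).mul_geom_sum₂, coeff_mul_low]
    · rcases Nat.lt_or_ge k 1 with h0 | h0
      · have : k = 0 := by omega
        subst this
        simp
      · rw [map_sum, Finset.sum_eq_zero]
        · simp
        · intro i hi
          rw [Finset.mem_range] at hi
          rw [map_mul, map_pow, map_pow, hU, hW]
          rcases Nat.eq_zero_or_pos i with h1 | h1
          · rw [zero_pow (n := k - 1 - i) (by omega), mul_zero]
          · rw [zero_pow (n := i) (by omega), zero_mul]
    · intro e he
      rw [map_sub, h e he, sub_self]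
  · intro h1
    exact absurd (Finset.mem_range.2 (by omega)) h1

theorem coeff_shiftS (c : ℚ) (V : MvPowerSeries (Fin 2) ℚ) (d : Fin 2 →₀ ℕ) :
    coeff d (shiftS c V) = ∑ t ∈ Finset.range (d 1 + 1),
    (Nat.choose (d 0 + t) t : ℚ) * c ^ t *
      MvPowerSeries.coeff (Finsupp.single 0 (d 0 + t) + Finsupp.single 1 (d 1 - t)) V := rfl

theorem shiftS_low (c : ℚ) (V W : MvPowerSeries (Fin 2) ℚ) (d : Fin 2 →₀ ℕ)
    (h : ∀ e : Fin 2 →₀ ℕ, e 0 + e 1 = d 0 + d 1 → coeff e V = coeff e W) :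
    coeff d (shiftS c V) = coeff d (shiftS c W) := by
  rw [coeff_shiftS, coeff_shiftS]
  refine Finset.sum_congr rfl fun t ht => ?_
  rw [Finset.mem_range] at ht
  rw [h]
  simp
  omega

theorem shiftS_sub (c : ℚ) (V W : MvPowerSeries (Fin 2) ℚ) (d : Fin 2 →₀ ℕ)
    (h : ∀ e : Fin 2 →₀ ℕ, e 0 + e 1 = d 0 + d 1 → e 1 < d 1 → coeff e V = coeff e W) :
    coeff d (shiftS c V) - coeff d (shiftS c W) = coeff d V - coeff d W := by
  rw [coeff_shiftS, coeff_shiftS, ← Finset.sum_sub_distrib, Finset.sum_eq_single 0]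
  · have : Finsupp.single 0 (d 0) + Finsupp.single 1 (d 1) = d := by
      ext i
      fin_cases i <;> simp
    simp [this]
  · intro t ht h0
    rw [Finset.mem_range] at ht
    rw [h, sub_self]
    · simp
      omega
    · simp
      omega
  · simp

theorem constantCoeff_shiftS (c : ℚ) (V : MvPowerSeries (Fin 2) ℚ) :
    constantCoeff (shiftS c V) = constantCoeff V := by
  rw [← coeff_zero_eq_constantCoeff_apply, coeff_shiftS]
  simp

theorem card_mono (m n : ℕ) : (Finset.univ.filter
      (fun α : Fin m → Fin (n + 1) => ∀ i j : Fin m, i ≤ j → α i ≤ α j)).card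
      = Nat.choose (m + n) m := by
  have h := Sym.card_sym_eq_choose (α := Fin (n + 1)) m
  rw [Fintype.card_fin, show n + 1 + m - 1 = m + n by omega] at h
  rw [← h, ← Finset.card_univ]
  refine Finset.card_bij (fun α _ => (⟨(List.ofFn α : Multiset _), by simp⟩ : Sym (Fin (n+1)) m))
    (fun _ _ => Finset.mem_univ _) ?_ ?_
  · intro α hα β hβ hab
    simp only [Finset.mem_filter, Finset.mem_univ, true_and] at hα hβ
    have h1 := congrArg Subtype.val hab
    simp only [Multiset.coe_eq_coe] at h1
    apply List.ofFn_injective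
    refine h1.eq_of_pairwise' (r := (· ≤ ·)) ?_ ?_
    · rw [List.pairwise_ofFn]
      exact fun i j hij => hα i j hij.le
    · rw [List.pairwise_ofFn]
      exact fun i j hij => hβ i j hij.le
  · rintro ⟨s, hs⟩ _
    have hl : (s.sort (· ≤ ·)).length = m := by simp [hs]
    refine ⟨fun i => (s.sort (· ≤ ·)).get (i.cast hl.symm), ?_, ?_⟩
    · simp only [Finset.mem_filter, Finset.mem_univ, true_and]
      intro i j hij
      have := s.pairwise_sort (· ≤ ·)
      rcases hij.eq_or_lt with h | h
      · rw [h]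
      · exact List.pairwise_iff_get.1 this _ _ (by simpa using h)
    · apply Subtype.ext
      simp only
      conv_rhs => rw [← s.sort_eq (· ≤ ·)]
      congr 1
      subst hl
      exact List.ofFn_get _

/-- There is exactly one formal power series `V ∈ ℚ[[X,E]]` with zero constant term
satisfying the difference equation
`∑_{0 ≤ α_1 ≤ ⋯ ≤ α_m ≤ n} exp(∑_{j=1}^m S_{α_j m-(j-1/2)n}(V)) = C(m+n, m)·(1+X)`. -/
theorem existsUnique_solution_of_difference_equation
    (m n : ℕ) (hm : 0 < m) (hn : 0 < n) (hmn : Nat.Coprime m n) :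
    ∃! V : MvPowerSeries (Fin 2) ℚ,
      MvPowerSeries.constantCoeff V = 0 ∧ diffEq m n V := by
  classical
  set A := Finset.univ.filter
      (fun α : Fin m → Fin (n + 1) => ∀ i j : Fin m, i ≤ j → α i ≤ α j) with hA
  have hcard : A.card = Nat.choose (m + n) m := card_mono m n
  let c : (Fin m → Fin (n + 1)) → Fin m → ℚ := fun α j =>
    ((α j : ℚ) * m - (((j : ℕ) : ℚ) + 1 / 2) * n)
  let U : (Fin m → Fin (n + 1)) → MvPowerSeries (Fin 2) ℚ → MvPowerSeries (Fin 2) ℚ :=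
    fun α V => ∑ j : Fin m, shiftS (c α j) V
  let F : MvPowerSeries (Fin 2) ℚ → MvPowerSeries (Fin 2) ℚ := fun V => ∑ α ∈ A, fexp (U α V)
  let B : MvPowerSeries (Fin 2) ℚ :=
    (Nat.choose (m + n) m : MvPowerSeries (Fin 2) ℚ) * (1 + MvPowerSeries.X 0)
  have key : ∀ d : Fin 2 →₀ ℕ, d ≠ 0 → ∀ V W : MvPowerSeries (Fin 2) ℚ,
      constantCoeff V = 0 → constantCoeff W = 0 →
      (∀ e : Fin 2 →₀ ℕ, toLex (e 0 + e 1, e 1) < toLex (d 0 + d 1, d 1) →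
        coeff e V = coeff e W) →
      coeff d (F V) - coeff d (F W) =
        ((Nat.choose (m + n) m : ℚ) * m) * (coeff d V - coeff d W) := by
    intro d hd V W hV hW h
    have hU : ∀ α V, constantCoeff V = 0 → constantCoeff (U α V) = 0 := by
      intro α V hV
      simp only [U, map_sum, constantCoeff_shiftS, hV, Finset.sum_const_zero]
    have h1 : ∀ α ∈ A, coeff d (fexp (U α V)) - coeff d (fexp (U α W)) =
        m * (coeff d V - coeff d W) := by
      intro α _
      rw [fexp_sub _ _ (hU α V hV) (hU α W hW) d hd]
      · simp only [U, map_sum]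
        rw [← Finset.sum_sub_distrib, Finset.sum_congr rfl (fun j _ => shiftS_sub (c α j) V W d ?_)]
        · simp
          ring
        · intro e he he1
          apply h
          rw [Prod.Lex.toLex_lt_toLex]
          exact Or.inr ⟨he, he1⟩
      · intro e he
        simp only [U, map_sum]
        refine Finset.sum_congr rfl fun j _ => shiftS_low _ _ _ _ fun f hf => ?_
        apply h
        rw [Prod.Lex.toLex_lt_toLex]
        exact Or.inl (by simpa [hf] using he)
    simp only [F, map_sum]
    rw [← Finset.sum_sub_distrib, Finset.sum_congr rfl h1, Finset.sum_const, hcard, nsmul_eq_mul,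
      mul_assoc]
  have hzero : ∀ V, coeff 0 (F V) = coeff 0 B := by
    intro V
    have h1 : ∀ W, coeff 0 (fexp W) = 1 := by
      intro W
      change (∑ n ∈ Finset.range (0 + 0 + 1), (Nat.factorial n : ℚ)⁻¹ * coeff 0 (W ^ n)) = 1
      simp
    simp only [F, map_sum, h1, B]
    simp [hcard]
  have hκ : ((Nat.choose (m + n) m : ℚ) * m) ≠ 0 := by
    have := Nat.choose_pos (Nat.le_add_right m n)
    positivity
  have main := exUnique_aux (ι := Fin 2 →₀ ℕ) (β := ℕ ×ₗ ℕ)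
    (fun e => toLex (e 0 + e 1, e 1)) 0 F B _ hκ key
  have heq : ∀ V : MvPowerSeries (Fin 2) ℚ, (constantCoeff V = 0 ∧ diffEq m n V) ↔
      (V 0 = 0 ∧ ∀ d, d ≠ 0 → F V d = B d) := by
    intro V
    refine and_congr Iff.rfl ⟨fun h d _ => congrFun (show F V = B from h) d, fun h => ?_⟩
    change F V = B
    funext d
    by_cases hd : d = 0
    · rw [hd]; exact hzero V
    · exact h d hd
  obtain ⟨V, hV, hu⟩ := main
  exact ⟨V, (heq V).2 hV, fun W hW => hu W ((heq W).1 hW)⟩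
end

section
/- For every $g\ge1$ there exist a polynomial $Q_g\in\mathbb{Q}[s,t]$ and a nonnegative integer $d_g$ such that for every pair $(m,n)$ of coprime positive integers, the gap coefficient satisfies $P_g(m,n)=Q_g(m,n)/m^{d_g}$; in other words, $P_g(m,n)$ is given by an element of $\mathbb{Q}[m,n,m^{-1}]$ evaluated at $(m,n)$, uniformly in $(m,n)$. -/
open MvPowerSeries

namespace GapPoly

/-- polynomial functions of two natural variables -/
noncomputable def PolyS : Subalgebra ℚ (ℕ → ℕ → ℚ) :=
  Algebra.adjoin ℚ {(fun (m _ : ℕ) => (m : ℚ)), (fun (_ n : ℕ) => (n : ℚ))}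

lemma fst_mem : (fun m _ => (m : ℚ) : ℕ → ℕ → ℚ) ∈ PolyS :=
  Algebra.subset_adjoin (by simp)

lemma snd_mem : (fun _ n => (n : ℚ) : ℕ → ℕ → ℚ) ∈ PolyS :=
  Algebra.subset_adjoin (by simp)

/-- falling factorial -/
def ff (a m : ℕ) : ℚ := ∏ i ∈ Finset.range a, ((m : ℚ) - i)

lemma ff_succ (a m : ℕ) : ff (a + 1) m = ff a m * ((m : ℚ) - a) := by
  simp [ff, Finset.prod_range_succ]

lemma ff_succ' (a m : ℕ) : ff (a + 1) (m + 1) = (m + 1) * ff a m := by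
  simp only [ff, Finset.prod_range_succ']
  push_cast
  rw [mul_comm]
  congr 1
  · ring
  · apply Finset.prod_congr rfl; intros; ring

lemma ff_zero' (a : ℕ) : ff (a + 1) 0 = 0 := by
  simp [ff, Finset.prod_range_succ']

/-- product basis -/
def Dab (p : ℕ × ℕ) : ℕ → ℕ → ℚ := fun m n => ff p.1 m * ff p.2 n

lemma mul_fst_span (x : ℕ → ℕ → ℚ) (hx : x ∈ Submodule.span ℚ (Set.range Dab)) :
    x * (fun (m _ : ℕ) => (m : ℚ)) ∈ Submodule.span ℚ (Set.range Dab) := by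
  induction hx using Submodule.span_induction with
  | mem x h =>
    obtain ⟨⟨a, b⟩, rfl⟩ := h
    have : Dab (a, b) * (fun (m _ : ℕ) => (m : ℚ)) = Dab (a + 1, b) + (a : ℚ) • Dab (a, b) := by
      funext m n
      simp [Dab, ff_succ]; ring
    rw [this]
    exact add_mem (Submodule.subset_span ⟨_, rfl⟩)
      (Submodule.smul_mem _ _ (Submodule.subset_span ⟨_, rfl⟩))
  | zero => rw [zero_mul]; exact zero_mem _
  | add x y _ _ hx hy => rw [add_mul]; exact add_mem hx hy
  | smul c x _ hx => rw [smul_mul_assoc]; exact Submodule.smul_mem _ _ hx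

lemma mul_snd_span (x : ℕ → ℕ → ℚ) (hx : x ∈ Submodule.span ℚ (Set.range Dab)) :
    x * (fun (_ n : ℕ) => (n : ℚ)) ∈ Submodule.span ℚ (Set.range Dab) := by
  induction hx using Submodule.span_induction with
  | mem x h =>
    obtain ⟨⟨a, b⟩, rfl⟩ := h
    have : Dab (a, b) * (fun (_ n : ℕ) => (n : ℚ)) = Dab (a, b + 1) + (b : ℚ) • Dab (a, b) := by
      funext m n
      simp [Dab, ff_succ]; ring
    rw [this]
    exact add_mem (Submodule.subset_span ⟨_, rfl⟩)
      (Submodule.smul_mem _ _ (Submodule.subset_span ⟨_, rfl⟩))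
  | zero => rw [zero_mul]; exact zero_mem _
  | add x y _ _ hx hy => rw [add_mul]; exact add_mem hx hy
  | smul c x _ hx => rw [smul_mul_assoc]; exact Submodule.smul_mem _ _ hx

lemma poly_mem_span (f : ℕ → ℕ → ℚ) (hf : f ∈ PolyS) :
    f ∈ Submodule.span ℚ (Set.range Dab) := by
  suffices h : ∀ x ∈ Submodule.span ℚ (Set.range Dab),
      x * f ∈ Submodule.span ℚ (Set.range Dab) by
    have h1 : (1 : ℕ → ℕ → ℚ) ∈ Submodule.span ℚ (Set.range Dab) :=
      Submodule.subset_span ⟨(0, 0), by funext m n; simp [Dab, ff]⟩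
    simpa using h 1 h1
  unfold PolyS at hf
  induction hf using Algebra.adjoin_induction with
  | mem x h =>
    rcases h with rfl | h
    · exact mul_fst_span
    · rw [Set.mem_singleton_iff] at h
      subst h
      exact mul_snd_span
  | algebraMap r =>
    intro x hx
    rw [mul_comm, ← Algebra.smul_def]
    exact Submodule.smul_mem _ _ hx
  | add x y _ _ hx hy =>
    intro z hz; rw [mul_add]; exact add_mem (hx z hz) (hy z hz)
  | mul x y _ _ hx hy =>
    intro z hz; rw [← mul_assoc]; exact hy _ (hx z hz)

lemma ff_fst_mem (a : ℕ) : (fun m _ => ff a m : ℕ → ℕ → ℚ) ∈ PolyS := by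
  induction a with
  | zero => simp only [ff, Finset.range_zero, Finset.prod_empty]; exact PolyS.one_mem
  | succ a ih =>
    have := PolyS.mul_mem ih (PolyS.sub_mem fst_mem (PolyS.algebraMap_mem (a : ℚ)))
    convert this using 1
    funext m n; simp [ff_succ]

lemma ff_snd_mem (a : ℕ) : (fun _ n => ff a n : ℕ → ℕ → ℚ) ∈ PolyS := by
  induction a with
  | zero => simp only [ff, Finset.range_zero, Finset.prod_empty]; exact PolyS.one_mem
  | succ a ih =>
    have := PolyS.mul_mem ih (PolyS.sub_mem snd_mem (PolyS.algebraMap_mem (a : ℚ)))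
    convert this using 1
    funext m n; simp [ff_succ]

lemma Dab_mem (p : ℕ × ℕ) : Dab p ∈ PolyS := PolyS.mul_mem (ff_fst_mem p.1) (ff_snd_mem p.2)

/-- solving the recursion -/
lemma solve (G : ℕ → ℕ → ℚ) (hG : G ∈ PolyS) :
    ∃ A ∈ PolyS, (∀ n, A 0 n = 0) ∧ ∀ m n : ℕ,
      ((m : ℚ) + 1 + n) * A (m + 1) n = n * A (m + 1) (n - 1) + (m + 1) * (A m n + G m n) := by
  have := poly_mem_span G hG
  induction this using Submodule.span_induction with
  | mem x h =>
    obtain ⟨⟨a, b⟩, rfl⟩ := h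
    refine ⟨((a + b + 1 : ℚ)⁻¹) • Dab (a + 1, b), PolyS.smul_mem (Dab_mem _) _, ?_, ?_⟩
    · intro n; simp [Dab, ff_zero']
    · intro m n
      have h0 : (a + b + 1 : ℚ) ≠ 0 := by positivity
      have key : (n : ℚ) * ff b (n - 1) = ff b n * (n - b) := by
        rw [← ff_succ]
        cases n with
        | zero => simp [ff_zero']
        | succ n => rw [ff_succ']; push_cast; simp
      have k2 : ((m : ℚ) + 1) * ff (a + 1) m = ff (a + 1) (m + 1) * (m - a) := by
        rw [ff_succ, ff_succ']; ring
      have k3 := ff_succ' a m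
      simp only [Pi.smul_apply, Dab, smul_eq_mul]
      field_simp
      linear_combination (-ff (a + 1) (m + 1)) * key - ff b n * k2 + ff b n * (a + b + 1) * k3
  | zero =>
    exact ⟨0, PolyS.zero_mem, by simp, by simp⟩
  | add x y hx hy ihx ihy =>
    obtain ⟨A, hA, hA0, hA1⟩ := ihx (by
      have : Submodule.span ℚ (Set.range Dab) ≤ Subalgebra.toSubmodule PolyS :=
        Submodule.span_le.2 (by rintro _ ⟨p, rfl⟩; exact Dab_mem p)
      exact this hx)
    obtain ⟨B, hB, hB0, hB1⟩ := ihy (by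
      have : Submodule.span ℚ (Set.range Dab) ≤ Subalgebra.toSubmodule PolyS :=
        Submodule.span_le.2 (by rintro _ ⟨p, rfl⟩; exact Dab_mem p)
      exact this hy)
    refine ⟨A + B, PolyS.add_mem hA hB, by simp [hA0, hB0], ?_⟩
    intro m n
    simp only [Pi.add_apply]
    linear_combination hA1 m n + hB1 m n
  | smul c x hx ihx =>
    obtain ⟨A, hA, hA0, hA1⟩ := ihx (by
      have : Submodule.span ℚ (Set.range Dab) ≤ Subalgebra.toSubmodule PolyS :=
        Submodule.span_le.2 (by rintro _ ⟨p, rfl⟩; exact Dab_mem p)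
      exact this hx)
    refine ⟨c • A, PolyS.smul_mem hA _, by simp [hA0], ?_⟩
    intro m n
    simp only [Pi.smul_apply, smul_eq_mul]
    linear_combination c * hA1 m n

/-- weakly increasing sequences bounded by n -/
noncomputable def Mn (m n : ℕ) : Finset (Fin m → ℕ) :=
  open Classical in
  (Fintype.piFinset (fun _ : Fin m => Finset.range (n + 1))).filter Monotone

lemma mem_Mn {m n : ℕ} {β : Fin m → ℕ} : β ∈ Mn m n ↔ (∀ i, β i ≤ n) ∧ Monotone β := by
  simp [Mn, Fintype.mem_piFinset, Nat.lt_succ_iff]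

lemma sum_Mn_zero (n : ℕ) (F : (Fin 0 → ℕ) → ℚ) : ∑ β ∈ Mn 0 n, F β = F Fin.elim0 := by
  have : Mn 0 n = {Fin.elim0} := by
    ext β
    rw [mem_Mn]
    simp only [Finset.mem_singleton]
    constructor
    · intro; funext i; exact i.elim0
    · rintro rfl; exact ⟨fun i => i.elim0, fun i => i.elim0⟩
  simp [this]

lemma sum_Mn_succ (m n : ℕ) (F : (Fin (m + 1) → ℕ) → ℚ) :
    ∑ β ∈ Mn (m + 1) n, F β = ∑ β ∈ Mn m n, F (Fin.snoc (α := fun _ => ℕ) β n)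
      + if n = 0 then 0 else ∑ β ∈ Mn (m + 1) (n - 1), F β := by
  rw [← Finset.sum_filter_add_sum_filter_not (Mn (m + 1) n) (fun β => β (Fin.last m) = n)]
  congr 1
  · symm
    refine Finset.sum_bij' (fun β _ => Fin.snoc (α := fun _ => ℕ) β n) (fun β _ => Fin.init (α := fun _ => ℕ) β)
      ?_ ?_ ?_ ?_ ?_
    · intro β hβ
      rw [mem_Mn] at hβ
      rw [Finset.mem_filter, mem_Mn]
      refine ⟨⟨?_, ?_⟩, by simp⟩
      · intro i
        refine Fin.lastCases ?_ (fun j => ?_) i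
        · simp
        · simpa using hβ.1 j
      · intro i j
        refine Fin.lastCases ?_ (fun j => ?_) j
        · intro _
          refine Fin.lastCases ?_ (fun i => ?_) i
          · simp
          · simpa using hβ.1 i
        · refine Fin.lastCases ?_ (fun i => ?_) i
          · intro h
            exact absurd h (by simpa using Fin.castSucc_lt_last j)
          · intro h
            simpa using hβ.2 (by simpa using h)
    · intro β hβ
      rw [Finset.mem_filter, mem_Mn] at hβ
      rw [mem_Mn]
      refine ⟨fun i => hβ.1.1 _, fun i j h => hβ.1.2 (by simpa using h)⟩
    · intro β _; simp
    · intro β hβ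
      rw [Finset.mem_filter] at hβ
      have := Fin.snoc_init_self (α := fun _ => ℕ) β
      rw [hβ.2] at this
      exact this
    · intros; rfl
  · split_ifs with h
    · apply Finset.sum_eq_zero
      intro β hβ
      rw [Finset.mem_filter, mem_Mn] at hβ
      have := hβ.1.1 (Fin.last m)
      exact absurd (by omega) hβ.2
    · apply Finset.sum_congr _ (fun _ _ => rfl)
      ext β
      rw [Finset.mem_filter, mem_Mn, mem_Mn]
      constructor
      · rintro ⟨⟨h1, h2⟩, h3⟩
        refine ⟨fun i => ?_, h2⟩
        have := h2 (Fin.le_last i)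
        have := h1 (Fin.last m)
        omega
      · rintro ⟨h1, h2⟩
        refine ⟨⟨fun i => ?_, h2⟩, ?_⟩
        · have := h1 i; omega
        · have := h1 (Fin.last m); omega

lemma choose_rec1 (m n : ℕ) : ((m : ℚ) + 1 + n) * (Nat.choose (m + n) m : ℚ)
    = (m + 1) * (Nat.choose (m + 1 + n) (m + 1) : ℚ) := by
  have := Nat.add_one_mul_choose_eq (m + n) m
  have h2 : m + 1 + n = m + n + 1 := by ring
  rw [h2]
  have h3 : ((m + n + 1 : ℕ) : ℚ) * (Nat.choose (m + n) m : ℚ)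
    = (Nat.choose (m + n + 1) (m + 1) : ℚ) * ((m + 1 : ℕ) : ℚ) := by exact_mod_cast this
  push_cast at h3
  linear_combination h3

lemma choose_rec2 (m n : ℕ) : ((m : ℚ) + 1 + (n + 1)) * (Nat.choose (m + 1 + n) (m + 1) : ℚ)
    = (n + 1) * (Nat.choose (m + 1 + (n + 1)) (m + 1) : ℚ) := by
  have := choose_rec1 n (m + 1)
  rw [show n + (m + 1) = m + 1 + n by ring, show n + 1 + (m + 1) = m + 1 + (n + 1) by ring] at this
  rw [Nat.choose_symm_of_eq_add (show m + 1 + n = (m + 1) + n by ring),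
    Nat.choose_symm_of_eq_add (show m + 1 + (n + 1) = (m + 1) + (n + 1) by ring)]
  push_cast at this
  linear_combination this

lemma rec_unique (T A G : ℕ → ℕ → ℚ)
    (hA : ∀ m n : ℕ,
      ((m : ℚ) + 1 + n) * A (m + 1) n = n * A (m + 1) (n - 1) + (m + 1) * (A m n + G m n))
    (h0 : ∀ n, T 0 n = A 0 n)
    (hT : ∀ m n, T (m + 1) n = T m n + Nat.choose (m + n) m * G m n
      + if n = 0 then 0 else T (m + 1) (n - 1)) (m n : ℕ) :
    T m n = Nat.choose (m + n) m * A m n := by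
  induction m generalizing n with
  | zero => simp [h0]
  | succ m ihm =>
    induction n with
    | zero =>
      have := hT m 0
      rw [ihm] at this
      rw [this]
      have h := hA m 0
      have hm : (m : ℚ) + 1 ≠ 0 := by positivity
      have : A (m + 1) 0 = A m 0 + G m 0 := by
        apply mul_left_cancel₀ hm
        simpa using h
      simp [this]
    | succ n ihn =>
      have h := hT m (n + 1)
      simp only [Nat.add_sub_cancel] at h
      rw [ihm, ihn] at h
      rw [if_neg (by omega)] at h
      have h' := hA m (n + 1)
      simp only [Nat.add_sub_cancel] at h'
      push_cast at h'
      have c1 := choose_rec1 m (n + 1)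
      have c2 := choose_rec2 m n
      push_cast at c1
      have hm : (m : ℚ) + 1 + (n + 1) ≠ 0 := by positivity
      apply mul_left_cancel₀ hm
      rw [h]
      linear_combination (A m (n + 1) + G m (n + 1)) * c1 + A (m + 1) n * c2
        - (Nat.choose (m + 1 + (n + 1)) (m + 1) : ℚ) * h'

/-- the averages are polynomial -/
lemma avg_poly {ι : Type*} [DecidableEq ι] (f : ι → ℕ → ℕ → ℚ)
    (hf : ∀ i, (fun m n => f i n m) ∈ PolyS) (s : Finset ι) :
    ∃ A ∈ PolyS, ∀ m n : ℕ,
      ∑ β ∈ Mn m n, ∏ i ∈ s, ∑ j : Fin m, f i (β j) j = Nat.choose (m + n) m * A m n := by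
  induction s using Finset.strongInduction with
  | H s ih =>
    choose! A hA hAe using ih
    have hG : (∑ t ∈ s.ssubsets, A t * ∏ i ∈ s \ t, (fun m n => f i n m)) ∈ PolyS := by
      refine PolyS.sum_mem fun t ht => PolyS.mul_mem (hA t (Finset.mem_ssubsets.1 ht)) ?_
      exact PolyS.prod_mem fun i _ => hf i
    obtain ⟨B, hB, hB0, hB1⟩ := solve _ hG
    set G := (∑ t ∈ s.ssubsets, A t * ∏ i ∈ s \ t, (fun m n => f i n m)) with hGdef
    let c : ℚ := ∏ i ∈ s, 0
    refine ⟨B + algebraMap ℚ _ c, PolyS.add_mem hB (PolyS.algebraMap_mem _), ?_⟩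
    apply rec_unique _ _ G
    · intro m n
      have := hB1 m n
      simp only [Pi.add_apply, Pi.algebraMap_apply, Algebra.algebraMap_self, RingHom.id_apply]
      linear_combination this
    · intro n
      rw [sum_Mn_zero]
      simp [hB0, c]
    · intro m n
      rw [sum_Mn_succ]
      congr 1
      have : ∀ β : Fin m → ℕ, ∏ i ∈ s, ∑ j : Fin (m + 1),
          f i ((Fin.snoc β n : Fin (m + 1) → ℕ) j) j
          = ∏ i ∈ s, ∑ j : Fin m, f i (β j) j
            + ∑ t ∈ s.ssubsets, (∏ i ∈ t, ∑ j : Fin m, f i (β j) j) * ∏ i ∈ s \ t, f i n m := by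
        intro β
        simp only [Fin.sum_univ_castSucc, Fin.snoc_castSucc, Fin.snoc_last, Fin.val_castSucc,
          Fin.val_last]
        rw [Finset.prod_add]
        have hs : s.powerset = insert s s.ssubsets := by
          ext t; simp only [Finset.mem_powerset, Finset.mem_insert, Finset.mem_ssubsets]
          constructor
          · intro h; exact h.eq_or_ssubset
          · rintro (rfl | h)
            · exact subset_rfl
            · exact h.subset
        rw [hs, Finset.sum_insert (by simp)]
        simp
      simp only [this]
      rw [Finset.sum_add_distrib]
      congr 1
      rw [Finset.sum_comm, hGdef]
      simp only [Finset.sum_apply, Pi.mul_apply, Finset.prod_apply]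
      rw [Finset.mul_sum]
      apply Finset.sum_congr rfl
      intro t ht
      rw [← Finset.sum_mul, hAe t (Finset.mem_ssubsets.1 ht)]
      ring

lemma card_Mn (m n : ℕ) : ((Mn m n).card : ℚ) = Nat.choose (m + n) m := by
  have := rec_unique (fun m n => ∑ β ∈ Mn m n, (1 : ℚ)) (fun _ _ => 1) (fun _ _ => 0)
    (by intro m n; ring) (by intro n; rw [sum_Mn_zero])
    (by intro m n; rw [sum_Mn_succ]; simp) m n
  simpa using this

/-- parameter type -/
structure TT where
  m : ℕ
  n : ℕ
  V : MvPowerSeries (Fin 2) ℚ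
  hm : 0 < m
  hn : 0 < n
  h0 : MvPowerSeries.constantCoeff V = 0
  hV : diffEq m n V

/-- good functions -/
noncomputable def Good : Subalgebra ℚ (TT → ℚ) :=
  Algebra.adjoin ℚ {(fun t : TT => (t.m : ℚ)), (fun t : TT => (t.n : ℚ)),
    (fun t : TT => (t.m : ℚ)⁻¹)}

lemma good_m : (fun t : TT => (t.m : ℚ)) ∈ Good := Algebra.subset_adjoin (by simp)
lemma good_n : (fun t : TT => (t.n : ℚ)) ∈ Good := Algebra.subset_adjoin (by simp)
lemma good_inv : (fun t : TT => (t.m : ℚ)⁻¹) ∈ Good := Algebra.subset_adjoin (by simp)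

lemma good_of_poly (A : ℕ → ℕ → ℚ) (hA : A ∈ PolyS) : (fun t : TT => A t.m t.n) ∈ Good := by
  unfold PolyS at hA
  induction hA using Algebra.adjoin_induction with
  | mem x h =>
    rcases h with rfl | h
    · exact good_m
    · rw [Set.mem_singleton_iff] at h
      subst h
      exact good_n
  | algebraMap r => exact Good.algebraMap_mem r
  | add x y _ _ hx hy => exact Good.add_mem hx hy
  | mul x y _ _ hx hy => exact Good.mul_mem hx hy

lemma good_repr (f : TT → ℚ) (hf : f ∈ Good) :
    ∃ (Q : MvPolynomial (Fin 2) ℚ) (d : ℕ), ∀ t : TT,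
      f t = MvPolynomial.eval (fun i : Fin 2 => if i = 0 then (t.m : ℚ) else (t.n : ℚ)) Q
        / (t.m : ℚ) ^ d := by
  unfold Good at hf
  induction hf using Algebra.adjoin_induction with
  | mem x h =>
    rcases h with rfl | rfl | h
    · exact ⟨MvPolynomial.X 0, 0, by simp⟩
    · exact ⟨MvPolynomial.X 1, 0, by simp⟩
    · rw [Set.mem_singleton_iff] at h
      subst h
      exact ⟨1, 1, by simp⟩
  | algebraMap r => exact ⟨MvPolynomial.C r, 0, by simp⟩
  | add x y _ _ hx hy =>
    obtain ⟨Q, d, h⟩ := hx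
    obtain ⟨R, e, k⟩ := hy
    refine ⟨Q * MvPolynomial.X 0 ^ e + R * MvPolynomial.X 0 ^ d, d + e, fun t => ?_⟩
    have hm : (t.m : ℚ) ≠ 0 := by exact_mod_cast t.hm.ne'
    rw [Pi.add_apply, h, k]
    simp only [map_add, map_mul, map_pow, MvPolynomial.eval_X, if_true]
    field_simp
    ring
  | mul x y _ _ hx hy =>
    obtain ⟨Q, d, h⟩ := hx
    obtain ⟨R, e, k⟩ := hy
    refine ⟨Q * R, d + e, fun t => ?_⟩
    rw [Pi.mul_apply, h, k, map_mul, pow_add, div_mul_div_comm]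

/-- sample space -/
abbrev Om := Σ t : TT, (Fin t.m → ℕ)

/-- generalised power sums -/
def ps (p : ℕ × ℕ) : Om → ℚ := fun w => ∑ j : Fin w.1.m, (w.2 j : ℚ) ^ p.1 * (((j : ℕ) : ℚ) + 1 / 2) ^ p.2

/-- lift to the sample space -/
def lif (g : TT → ℚ) : Om → ℚ := fun w => g w.1

/-- nice random variables -/
noncomputable def Nice : Subalgebra ℚ (Om → ℚ) :=
  Algebra.adjoin ℚ ((lif '' (Good : Set (TT → ℚ))) ∪ Set.range ps)

lemma nice_lif (g : TT → ℚ) (hg : g ∈ Good) : lif g ∈ Nice :=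
  Algebra.subset_adjoin (Or.inl ⟨g, hg, rfl⟩)

lemma nice_ps (p : ℕ × ℕ) : ps p ∈ Nice :=
  Algebra.subset_adjoin (Or.inr ⟨p, rfl⟩)

lemma ps_poly (p : ℕ × ℕ) :
    (fun m n : ℕ => (n : ℚ) ^ p.1 * ((m : ℚ) + 1 / 2) ^ p.2) ∈ PolyS :=
  PolyS.mul_mem (PolyS.pow_mem snd_mem _)
    (PolyS.pow_mem (PolyS.add_mem fst_mem (PolyS.algebraMap_mem (1 / 2 : ℚ))) _)

lemma avg_mset (M : Multiset (ℕ × ℕ)) : ∃ A ∈ PolyS, ∀ t : TT,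
    ∑ β ∈ Mn t.m t.n, (M.map ps).prod ⟨t, β⟩ = Nat.choose (t.m + t.n) t.m * A t.m t.n := by
  obtain ⟨l, rfl⟩ := Quot.exists_rep M
  obtain ⟨A, hA, h⟩ := avg_poly (ι := Fin l.length)
    (fun i n m => (n : ℚ) ^ (l.get i).1 * ((m : ℚ) + 1 / 2) ^ (l.get i).2)
    (fun i => ps_poly (l.get i)) Finset.univ
  refine ⟨A, hA, fun t => ?_⟩
  rw [← h]
  apply Finset.sum_congr rfl
  intro β _
  have : (Multiset.map ps (Quot.mk _ l)).prod = ∏ i : Fin l.length, ps (l.get i) := by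
    change (Multiset.map ps (l : Multiset (ℕ × ℕ))).prod = _
    rw [Multiset.map_coe, Multiset.prod_coe, ← List.prod_ofFn]
    congr 1
    apply List.ext_get
    · simp
    · intro n h1 h2; simp
  rw [this, Finset.prod_apply]
  rfl

lemma avg_nice (f : Om → ℚ) (hf : f ∈ Nice) : ∃ g ∈ Good, ∀ t : TT,
    ∑ β ∈ Mn t.m t.n, f ⟨t, β⟩ = Nat.choose (t.m + t.n) t.m * g t := by
  have hf' : f ∈ Subalgebra.toSubmodule Nice := hf
  unfold Nice at hf'
  rw [Algebra.adjoin_eq_span] at hf'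
  induction hf' using Submodule.span_induction with
  | mem x h =>
    have : ∃ g ∈ Good, ∃ M : Multiset (ℕ × ℕ), x = lif g * (M.map ps).prod := by
      clear hf
      induction h using Submonoid.closure_induction with
      | mem x h =>
        rcases h with ⟨g, hg, rfl⟩ | ⟨p, rfl⟩
        · exact ⟨g, hg, 0, by simp⟩
        · exact ⟨1, Good.one_mem, {p}, by simp; funext w; simp [lif]⟩
      | one => exact ⟨1, Good.one_mem, 0, by simp; funext w; simp [lif]⟩
      | mul x y _ _ hx hy =>
        obtain ⟨g, hg, M, rfl⟩ := hx
        obtain ⟨g', hg', M', rfl⟩ := hy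
        refine ⟨g * g', Good.mul_mem hg hg', M + M', ?_⟩
        rw [Multiset.map_add, Multiset.prod_add]
        have : lif (g * g') = lif g * lif g' := rfl
        rw [this]; ring
    obtain ⟨g, hg, M, rfl⟩ := this
    obtain ⟨A, hA, h⟩ := avg_mset M
    refine ⟨_, Good.mul_mem hg (good_of_poly A hA), fun t => ?_⟩
    simp only [Pi.mul_apply, lif]
    rw [← Finset.mul_sum, h]
    ring
  | zero => exact ⟨0, Good.zero_mem, by simp⟩
  | add x y hx hy ihx ihy =>
    obtain ⟨g, hg, h⟩ := ihx (by unfold Nice; rw [← Subalgebra.mem_toSubmodule, Algebra.adjoin_eq_span]; exact hx)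
    obtain ⟨g', hg', h'⟩ := ihy (by unfold Nice; rw [← Subalgebra.mem_toSubmodule, Algebra.adjoin_eq_span]; exact hy)
    refine ⟨g + g', Good.add_mem hg hg', fun t => ?_⟩
    simp only [Pi.add_apply]
    rw [Finset.sum_add_distrib, h, h']; ring
  | smul c x hx ihx =>
    obtain ⟨g, hg, h⟩ := ihx (by unfold Nice; rw [← Subalgebra.mem_toSubmodule, Algebra.adjoin_eq_span]; exact hx)
    refine ⟨c • g, Good.smul_mem hg c, fun t => ?_⟩
    simp only [Pi.smul_apply, smul_eq_mul]
    rw [← Finset.mul_sum, h]; ring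

/-- the shift amounts -/
def cc (w : Om) (j : Fin w.1.m) : ℚ := (w.2 j : ℚ) * w.1.m - (((j : ℕ) : ℚ) + 1 / 2) * w.1.n

lemma nice_cc (k : ℕ) : (fun w : Om => ∑ j, cc w j ^ k) ∈ Nice := by
  have : (fun w : Om => ∑ j, cc w j ^ k) =
      ∑ s ∈ Finset.range (k + 1), (lif (fun t => (t.m : ℚ)) ^ s * (-lif (fun t => (t.n : ℚ))) ^ (k - s)
        * ps (s, k - s)) * algebraMap ℚ _ (k.choose s : ℚ) := by
    funext w
    simp only [Finset.sum_apply, Pi.mul_apply, Pi.pow_apply, Pi.neg_apply, lif, ps,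
      Pi.algebraMap_apply, Algebra.algebraMap_self, RingHom.id_apply]
    simp only [Finset.mul_sum, Finset.sum_mul]
    rw [Finset.sum_comm]
    apply Finset.sum_congr rfl
    intro j _
    rw [cc, sub_eq_add_neg, add_pow]
    apply Finset.sum_congr rfl
    intro s _
    rw [mul_pow, ← mul_neg, mul_pow]
    ring
  rw [this]
  refine Nice.sum_mem fun s _ => Nice.mul_mem (Nice.mul_mem (Nice.mul_mem ?_ ?_) (nice_ps _))
    (Nice.algebraMap_mem _)
  · exact Nice.pow_mem (nice_lif _ good_m) _
  · exact Nice.pow_mem (Nice.neg_mem (nice_lif _ good_n)) _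

/-- the exponent -/
noncomputable def WW (w : Om) : MvPowerSeries (Fin 2) ℚ := ∑ j, shiftS (cc w j) w.1.V

/-- coefficients of `V` -/
noncomputable def vv (i k : ℕ) : TT → ℚ := fun t =>
  MvPowerSeries.coeff (Finsupp.single 0 i + Finsupp.single 1 k) t.V

lemma coeff_WW (d : Fin 2 →₀ ℕ) : (fun w => MvPowerSeries.coeff d (WW w)) =
    ∑ s ∈ Finset.range (d 1 + 1), (algebraMap ℚ (Om → ℚ) ((d 0 + s).choose s : ℚ)) *
      (fun w : Om => ∑ j, cc w j ^ s) * lif (vv (d 0 + s) (d 1 - s)) := by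
  funext w
  simp only [WW, map_sum, Finset.sum_apply, Pi.mul_apply, lif, vv,
      Pi.algebraMap_apply, Algebra.algebraMap_self, RingHom.id_apply]
  simp only [Finset.mul_sum, Finset.sum_mul]
  rw [Finset.sum_comm]
  rfl

lemma vv_zero : vv 0 0 = 0 := by
  funext t
  simpa [vv] using t.h0

lemma WW_const (w : Om) : MvPowerSeries.coeff 0 (WW w) = 0 := by
  have := congrFun (coeff_WW 0) w
  simp [vv_zero, lif] at this
  simpa using this

lemma pow_nice_lt (D : ℕ) (h : ∀ d : Fin 2 →₀ ℕ, d 0 + d 1 < D →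
    (fun w => MvPowerSeries.coeff d (WW w)) ∈ Nice) (k : ℕ) :
    ∀ d : Fin 2 →₀ ℕ, d 0 + d 1 < D → (fun w => MvPowerSeries.coeff d (WW w ^ k)) ∈ Nice := by
  induction k with
  | zero =>
    intro d _
    simp only [pow_zero]
    exact Nice.algebraMap_mem (MvPowerSeries.coeff d (1 : MvPowerSeries (Fin 2) ℚ))
  | succ k ih =>
    intro d hd
    have : (fun w => MvPowerSeries.coeff d (WW w ^ (k + 1))) =
        ∑ p ∈ Finset.HasAntidiagonal.antidiagonal d, (fun w => MvPowerSeries.coeff p.1 (WW w ^ k)) *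
          (fun w => MvPowerSeries.coeff p.2 (WW w)) := by
      funext w
      rw [pow_succ, MvPowerSeries.coeff_mul]
      simp
    rw [this]
    refine Nice.sum_mem fun p hp => ?_
    have hp' := Finset.HasAntidiagonal.mem_antidiagonal.1 hp
    have e0 := DFunLike.congr_fun hp' 0
    have e1 := DFunLike.congr_fun hp' 1
    simp only [Finsupp.add_apply] at e0 e1
    exact Nice.mul_mem (ih _ (by omega)) (h _ (by omega))

lemma eq_zero_of (d : Fin 2 →₀ ℕ) (h : d 0 + d 1 = 0) : d = 0 := by
  ext i
  fin_cases i
  · simpa using (by omega : d 0 = 0)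
  · simpa using (by omega : d 1 = 0)

lemma pow_nice (D : ℕ) (h : ∀ d : Fin 2 →₀ ℕ, d 0 + d 1 < D →
    (fun w => MvPowerSeries.coeff d (WW w)) ∈ Nice) (k : ℕ)
    (d : Fin 2 →₀ ℕ) (hd : d 0 + d 1 = D) :
    (fun w => MvPowerSeries.coeff d (WW w ^ (k + 2))) ∈ Nice := by
  have : (fun w => MvPowerSeries.coeff d (WW w ^ (k + 2))) =
      ∑ p ∈ Finset.HasAntidiagonal.antidiagonal d, (fun w => MvPowerSeries.coeff p.1 (WW w ^ (k + 1))) *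
        (fun w => MvPowerSeries.coeff p.2 (WW w)) := by
    funext w
    rw [pow_succ, MvPowerSeries.coeff_mul]
    simp
  rw [this]
  refine Nice.sum_mem fun p hp => ?_
  have hp' := Finset.HasAntidiagonal.mem_antidiagonal.1 hp
  have e0 := DFunLike.congr_fun hp' 0
  have e1 := DFunLike.congr_fun hp' 1
  simp only [Finsupp.add_apply] at e0 e1
  by_cases h1 : p.1 0 + p.1 1 = 0
  · rw [eq_zero_of _ h1]
    have : (fun w => MvPowerSeries.coeff (0 : Fin 2 →₀ ℕ) (WW w ^ (k + 1))) = 0 := by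
      funext w
      have := WW_const w
      rw [MvPowerSeries.coeff_zero_eq_constantCoeff] at this ⊢
      simp [this]
    rw [this, zero_mul]; exact Nice.zero_mem
  by_cases h2 : p.2 0 + p.2 1 = 0
  · rw [eq_zero_of _ h2]
    have : (fun w => MvPowerSeries.coeff (0 : Fin 2 →₀ ℕ) (WW w)) = 0 := by
      funext w
      exact WW_const w
    rw [this, mul_zero]; exact Nice.zero_mem
  exact Nice.mul_mem (pow_nice_lt D h _ _ (by omega)) (h _ (by omega))

lemma sum_eq (t : TT) (d : Fin 2 →₀ ℕ) :
    ∑ β ∈ Mn t.m t.n, MvPowerSeries.coeff d (fexp (WW ⟨t, β⟩)) =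
      Nat.choose (t.m + t.n) t.m *
        MvPowerSeries.coeff d (1 + MvPowerSeries.X 0 : MvPowerSeries (Fin 2) ℚ) := by
  have h := congrArg (MvPowerSeries.coeff d) t.hV
  rw [← nsmul_eq_mul, map_nsmul, nsmul_eq_mul, map_sum] at h
  rw [← h]
  symm
  refine Finset.sum_bij' (fun α _ j => (α j : ℕ))
    (fun β hβ j => ⟨β j, Nat.lt_succ_of_le ((mem_Mn.1 hβ).1 j)⟩) ?_ ?_ ?_ ?_ ?_
  · intro α hα
    rw [Finset.mem_filter] at hα
    rw [mem_Mn]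
    exact ⟨fun i => Nat.lt_succ_iff.1 (α i).2, fun i j hij => hα.2 i j hij⟩
  · intro β hβ
    rw [Finset.mem_filter]
    exact ⟨Finset.mem_univ _, fun i j hij => (mem_Mn.1 hβ).2 hij⟩
  · intro α _; rfl
  · intro β _; rfl
  · intro α _; rfl

lemma vv_good (D : ℕ) : ∀ k i, i + k = D → vv i k ∈ Good := by
  induction D using Nat.strong_induction_on with
  | _ D ihD =>
  intro k
  induction k using Nat.strong_induction_on with
  | _ k ihk =>
  intro i hik
  by_cases hD0 : D = 0
  · obtain rfl : i = 0 := by omega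
    obtain rfl : k = 0 := by omega
    rw [vv_zero]; exact Good.zero_mem
  have hlt : ∀ d : Fin 2 →₀ ℕ, d 0 + d 1 < D →
      (fun w => MvPowerSeries.coeff d (WW w)) ∈ Nice := by
    intro d hd
    rw [coeff_WW]
    refine Nice.sum_mem fun s hs => Nice.mul_mem (Nice.mul_mem (Nice.algebraMap_mem _)
      (nice_cc s)) (nice_lif _ ?_)
    have := Finset.mem_range.1 hs
    exact ihD _ (by omega) _ _ rfl
  set d : Fin 2 →₀ ℕ := Finsupp.single 0 i + Finsupp.single 1 k with hd
  have d0 : d 0 = i := by simp [hd]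
  have d1 : d 1 = k := by simp [hd]
  -- the linear term
  obtain ⟨f1, hf1, e1⟩ : ∃ f ∈ Nice, ∀ w : Om,
      MvPowerSeries.coeff d (WW w) = w.1.m * vv i k w.1 + f w := by
    have h := coeff_WW d
    rw [Finset.sum_range_succ'] at h
    refine ⟨∑ s ∈ Finset.range (d 1), (algebraMap ℚ (Om → ℚ)
      ((d 0 + (s + 1)).choose (s + 1) : ℚ)) * (fun w : Om => ∑ j, cc w j ^ (s + 1)) *
        lif (vv (d 0 + (s + 1)) (d 1 - (s + 1))), ?_, fun w => ?_⟩
    rotate_left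
    · have := congrFun h w
      rw [Pi.add_apply, add_comm] at this
      rw [this]
      congr 1
      simp [d0, d1, lif]
    · refine Nice.sum_mem fun s hs => Nice.mul_mem (Nice.mul_mem (Nice.algebraMap_mem _)
        (nice_cc _)) (nice_lif _ ?_)
      have := Finset.mem_range.1 hs
      exact ihk _ (by omega) _ (by omega)
  -- the full exponential
  obtain ⟨f2, hf2, e2⟩ : ∃ f ∈ Nice, ∀ w : Om,
      MvPowerSeries.coeff d (fexp (WW w)) = w.1.m * vv i k w.1 + f w := by
    refine ⟨(∑ r ∈ Finset.range (D - 1), algebraMap ℚ (Om → ℚ) ((Nat.factorial (r + 2) : ℚ)⁻¹) *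
      (fun w => MvPowerSeries.coeff d (WW w ^ (r + 2)))) + f1, ?_, fun w => ?_⟩
    · exact Nice.add_mem (Nice.sum_mem fun r _ => Nice.mul_mem (Nice.algebraMap_mem _)
        (pow_nice D hlt r d (by omega))) hf1
    · have hx : MvPowerSeries.coeff d (fexp (WW w)) = ∑ n ∈ Finset.range (d 0 + d 1 + 1),
        (Nat.factorial n : ℚ)⁻¹ * MvPowerSeries.coeff d (WW w ^ n) := rfl
      rw [hx, show d 0 + d 1 + 1 = (D - 1) + 1 + 1 by omega, Finset.sum_range_succ',
        Finset.sum_range_succ']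
      have hne : d ≠ 0 := by
        intro h
        rw [h] at d0 d1
        simp at d0 d1
        omega
      simp only [pow_zero, zero_add, pow_one, e1, MvPowerSeries.coeff_one, if_neg hne,
        Pi.add_apply, Finset.sum_apply, Pi.mul_apply,
        Pi.algebraMap_apply, Algebra.algebraMap_self, RingHom.id_apply]
      simp
      ring
  obtain ⟨g, hg, e3⟩ := avg_nice f2 hf2
  have hcard : ∀ t : TT, ((Mn t.m t.n).card : ℚ) = Nat.choose (t.m + t.n) t.m :=
    fun t => card_Mn t.m t.n
  have key : vv i k = (algebraMap ℚ _ (MvPowerSeries.coeff d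
      (1 + MvPowerSeries.X 0 : MvPowerSeries (Fin 2) ℚ)) - g) * (fun t : TT => (t.m : ℚ)⁻¹) := by
    funext t
    have h := sum_eq t d
    simp only [e2] at h
    rw [Finset.sum_add_distrib, e3, Finset.sum_const, nsmul_eq_mul, hcard] at h
    have hm : (t.m : ℚ) ≠ 0 := by exact_mod_cast t.hm.ne'
    have hc : (Nat.choose (t.m + t.n) t.m : ℚ) ≠ 0 := by
      exact_mod_cast (Nat.choose_pos (by omega)).ne'
    rw [← mul_add] at h
    have h := mul_left_cancel₀ hc h
    simp only [Pi.sub_apply, Pi.mul_apply, Pi.algebraMap_apply, Algebra.algebraMap_self,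
      RingHom.id_apply]
    rw [← h]
    field_simp
    ring
  rw [key]
  exact Good.mul_mem (Good.sub_mem (Good.algebraMap_mem _) hg) good_inv

end GapPoly

/-- For every `g ≥ 1` there exist a polynomial `Q_g ∈ ℚ[s,t]` and a nonnegative integer
`d_g` such that for every pair of coprime positive integers `(m,n)`, the gap coefficient
`P_g(m,n)` (the rational number such that the coefficient of `E^{2g}` in the unique
zero-constant-term solution `V` of the difference equation equals `P_g(m,n)·(1+X)^{-2g}`)
satisfies `P_g(m,n) = Q_g(m,n) / m^{d_g}`. -/
theorem gap_coefficient_is_polynomial (g : ℕ) (hg : 1 ≤ g) :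
    ∃ (Q : MvPolynomial (Fin 2) ℚ) (dg : ℕ),
      ∀ m n : ℕ, 0 < m → 0 < n → Nat.Coprime m n →
        ∀ V : MvPowerSeries (Fin 2) ℚ,
          MvPowerSeries.constantCoeff V = 0 → diffEq m n V →
          ∀ P : ℚ,
            (∀ i : ℕ, MvPowerSeries.coeff
                (Finsupp.single 0 i + Finsupp.single 1 (2 * g)) V
              = P * PowerSeries.coeff i
                  (((1 + PowerSeries.X : PowerSeries ℚ))⁻¹ ^ (2 * g))) →
            P = MvPolynomial.eval (fun i : Fin 2 => if i = 0 then (m : ℚ) else (n : ℚ)) Q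
                  / (m : ℚ) ^ dg := by
  obtain ⟨Q, d, h⟩ := GapPoly.good_repr _ (GapPoly.vv_good _ (2 * g) 0 rfl)
  refine ⟨Q, d, fun m n hm hn _ V h0 hV P hP => ?_⟩
  have h1 := h ⟨m, n, V, hm, hn, h0, hV⟩
  rw [← h1]
  have h2 := hP 0
  simp only [GapPoly.vv]
  rw [h2]
  simp
end

section
/- For every integer $k\ge1$, the Virasoro-type operators satisfy the commutation relation $L_0\circ L_k-L_k\circ L_0=-k\,L_k$ as $K$-linear operators on $R$. -/
open MvPolynomial

/-- The index set `𝓘 = {j/m : j ≥ 1} ∪ {j/n : j ≥ 1} ⊂ ℚ`. -/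
def Idx (m n : ℕ) : Set ℚ :=
  {q | (∃ j : ℕ, 0 < j ∧ q = (j : ℚ) / m) ∨ (∃ j : ℕ, 0 < j ∧ q = (j : ℚ) / n)}

lemma Idx.div_m_mem (m n : ℕ) {i : ℕ} (hi : 0 < i) : ((i : ℚ) / m) ∈ Idx m n :=
  Or.inl ⟨i, hi, rfl⟩

lemma Idx.div_n_mem (m n : ℕ) {i : ℕ} (hi : 0 < i) : ((i : ℚ) / n) ∈ Idx m n :=
  Or.inr ⟨i, hi, rfl⟩

lemma Idx.natCast_mem (m n : ℕ) (hm : 0 < m) {k : ℕ} (hk : 0 < k) :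
    ((k : ℚ)) ∈ Idx m n :=
  Or.inl ⟨k * m, by positivity, by push_cast; field_simp⟩

lemma Idx.add_natCast_mem (m n : ℕ) (hm : 0 < m) (hn : 0 < n) {q : ℚ}
    (h : q ∈ Idx m n) (k : ℕ) : q + (k : ℚ) ∈ Idx m n := by
  rcases h with ⟨j, hj, rfl⟩ | ⟨j, hj, rfl⟩
  · exact Or.inl ⟨j + k * m, by positivity, by push_cast; field_simp⟩
  · exact Or.inr ⟨j + k * n, by positivity, by push_cast; field_simp⟩

/-- The coefficient field `K = ℂ((ε))` of formal Laurent series, and `ε` itself. -/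
noncomputable def eps : LaurentSeries ℂ := HahnSeries.single (1 : ℤ) (1 : ℂ)

/-- The Virasoro operator
`L_0 = ∑_{μ∈𝓘} μ T_μ ∂_{T_μ} + x²/(2mnh ε²) + σ_1/24 - γ ∂_{T_1}` acting on
`R = K[x, T_μ (μ ∈ 𝓘)]`, where `γ = (m-1)!(n-1)!/(m+n)!` and `σ_1 = 1/h - 1/m - 1/n`.
The middle two terms act by multiplication. -/
noncomputable def L0op (m n : ℕ) (hm : 0 < m) (hn : 0 < n)
    (p : MvPolynomial (Unit ⊕ ↥(Idx m n)) (LaurentSeries ℂ)) :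
    MvPolynomial (Unit ⊕ ↥(Idx m n)) (LaurentSeries ℂ) :=
  (∑ᶠ μ : ↥(Idx m n),
      (((μ : ℚ) : LaurentSeries ℂ)) • (X (Sum.inr μ) * pderiv (Sum.inr μ) p))
  + C ((((2 * m * n * (m + n) : ℚ) : LaurentSeries ℂ) * eps ^ 2)⁻¹) *
      X (Sum.inl ()) ^ 2 * p
  + C (((1 / ((m : ℚ) + n) - 1 / m - 1 / n) / 24 : ℚ) : LaurentSeries ℂ) * p
  - C ((((Nat.factorial (m - 1) * Nat.factorial (n - 1) : ℚ) /
        (Nat.factorial (m + n) : ℚ)) : LaurentSeries ℂ)) *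
      pderiv (Sum.inr ⟨(1 : ℚ), Idx.natCast_mem m n hm Nat.one_pos⟩) p

/-- The Virasoro operator, for `k ≥ 1`,
`L_k = ∑_{μ∈𝓘} μ T_μ ∂_{T_{μ+k}} + (x/(mn)) ∂_{T_k} - γ ∂_{T_{1+k}}
 + (ε²/2m) ∑_{λ+μ=k, λ,μ∈𝓘₁} ∂_{T_λ}∂_{T_μ} + (ε²/2n) ∑_{λ+μ=k, λ,μ∈𝓘₂} ∂_{T_λ}∂_{T_μ}`,
where the pairs `(λ,μ) ∈ 𝓘₁²` with `λ+μ = k` are exactly `(i/m, (km-i)/m)`, `0 < i < km`,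
and similarly for `𝓘₂`. -/
noncomputable def Lkop (m n : ℕ) (hm : 0 < m) (hn : 0 < n) (k : ℕ) (hk : 1 ≤ k)
    (p : MvPolynomial (Unit ⊕ ↥(Idx m n)) (LaurentSeries ℂ)) :
    MvPolynomial (Unit ⊕ ↥(Idx m n)) (LaurentSeries ℂ) :=
  (∑ᶠ μ : ↥(Idx m n),
      (((μ : ℚ) : LaurentSeries ℂ)) •
        (X (Sum.inr μ) *
          pderiv (Sum.inr ⟨(μ : ℚ) + (k : ℚ), Idx.add_natCast_mem m n hm hn μ.2 k⟩) p))
  + C ((((m * n : ℚ) : LaurentSeries ℂ))⁻¹) * X (Sum.inl ()) *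
      pderiv (Sum.inr ⟨((k : ℚ)), Idx.natCast_mem m n hm hk⟩) p
  - C ((((Nat.factorial (m - 1) * Nat.factorial (n - 1) : ℚ) /
        (Nat.factorial (m + n) : ℚ)) : LaurentSeries ℂ)) *
      pderiv (Sum.inr ⟨((1 + k : ℕ) : ℚ),
        Idx.natCast_mem m n hm (by omega)⟩) p
  + C (eps ^ 2 / (((2 * m : ℚ) : LaurentSeries ℂ))) *
      ∑ i ∈ (Finset.Ioo 0 (k * m)).attach,
        pderiv (Sum.inr ⟨((i.1 : ℚ) / m),
            Idx.div_m_mem m n (Finset.mem_Ioo.mp i.2).1⟩)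
          (pderiv (Sum.inr ⟨(((k * m - i.1 : ℕ) : ℚ) / m),
            Idx.div_m_mem m n (by have := (Finset.mem_Ioo.mp i.2).2; omega)⟩) p)
  + C (eps ^ 2 / (((2 * n : ℚ) : LaurentSeries ℂ))) *
      ∑ i ∈ (Finset.Ioo 0 (k * n)).attach,
        pderiv (Sum.inr ⟨((i.1 : ℚ) / n),
            Idx.div_n_mem m n (Finset.mem_Ioo.mp i.2).1⟩)
          (pderiv (Sum.inr ⟨(((k * n - i.1 : ℕ) : ℚ) / n),
            Idx.div_n_mem m n (by have := (Finset.mem_Ioo.mp i.2).2; omega)⟩) p)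

section VirHelpers

theorem vir_supp {σ I F : Type*} [Field F] (c : I → F) (a g : I → σ)
    (hg : Function.Injective g) (p : MvPolynomial σ F) :
    (Function.support fun μ : I => c μ • (X (a μ) * pderiv (g μ) p)).Finite := by
  classical
  refine Set.Finite.subset (Set.Finite.preimage hg.injOn p.vars.finite_toSet) ?_
  intro μ hμ
  by_contra h
  apply hμ
  have : pderiv (g μ) p = 0 := pderiv_eq_zero_of_notMem_vars (by simpa using h)
  simp [this]

/-- The derivation given by an infinite sum. -/
noncomputable def virDer {σ I F : Type*} [Field F] (c : I → F) (a g : I → σ)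
    (hg : Function.Injective g) :
    Derivation F (MvPolynomial σ F) (MvPolynomial σ F) :=
  Derivation.mk'
    { toFun := fun p => ∑ᶠ μ : I, c μ • (X (a μ) * pderiv (g μ) p)
      map_add' := fun p q => by
        rw [← finsum_add_distrib (vir_supp c a g hg p) (vir_supp c a g hg q)]
        refine finsum_congr fun μ => ?_
        rw [map_add, mul_add, smul_add]
      map_smul' := fun r p => by
        rw [RingHom.id_apply, smul_finsum' _ (vir_supp c a g hg p)]
        refine finsum_congr fun μ => ?_
        rw [Derivation.map_smul, mul_smul_comm, smul_comm] }
    (fun p q => by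
      change (∑ᶠ μ : I, c μ • (X (a μ) * pderiv (g μ) (p * q))) =
        p • (∑ᶠ μ : I, c μ • (X (a μ) * pderiv (g μ) q)) +
        q • (∑ᶠ μ : I, c μ • (X (a μ) * pderiv (g μ) p))
      rw [smul_finsum' _ (vir_supp c a g hg p), smul_finsum' _ (vir_supp c a g hg q),
        ← finsum_add_distrib]
      · refine finsum_congr fun μ => ?_
        rw [Derivation.leibniz]
        simp only [smul_eq_mul, MvPolynomial.smul_eq_C_mul]
        ring
      · refine (vir_supp c a g hg q).subset ?_
        intro μ hμ h
        apply hμ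
        simp only at h
        simp only [h, smul_zero]
      · refine (vir_supp c a g hg p).subset ?_
        intro μ hμ h
        apply hμ
        simp only at h
        simp only [h, smul_zero])

theorem virDer_apply {σ I F : Type*} [Field F] (c : I → F) (a g : I → σ)
    (hg : Function.Injective g) (p : MvPolynomial σ F) :
    virDer c a g hg p = ∑ᶠ μ : I, c μ • (X (a μ) * pderiv (g μ) p) := rfl

theorem virDer_X {σ I F : Type*} [Field F] (c : I → F) (a g : I → σ)
    (hg : Function.Injective g) (μ : I) :
    virDer c a g hg (X (g μ)) = C (c μ) * X (a μ) := by
  classical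
  rw [virDer_apply, finsum_eq_single _ μ]
  · simp [MvPolynomial.smul_eq_C_mul]
  · intro ν hν
    rw [pderiv_X_of_ne (fun h => hν (hg h).symm)]
    simp

theorem virDer_X_of_notMem {σ I F : Type*} [Field F] (c : I → F) (a g : I → σ)
    (hg : Function.Injective g) (i : σ) (hi : ∀ μ, g μ ≠ i) :
    virDer c a g hg (X i) = 0 := by
  classical
  rw [virDer_apply]
  refine finsum_eq_zero_of_forall_eq_zero fun μ => ?_
  rw [pderiv_X_of_ne (fun h => hi μ h.symm)]
  simp

theorem vir_comm {σ F : Type*} [Field F]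
    (D₁ D₂ D₃ : Derivation F (MvPolynomial σ F) (MvPolynomial σ F)) (r : F)
    (h : ∀ i, D₁ (D₂ (X i)) - D₂ (D₁ (X i)) = C r * D₃ (X i)) (p : MvPolynomial σ F) :
    D₁ (D₂ p) = D₂ (D₁ p) + C r * D₃ p := by
  have : ⁅D₁, D₂⁆ = r • D₃ := by
    apply MvPolynomial.derivation_ext
    intro i
    rw [Derivation.commutator_apply, h, Derivation.smul_apply, MvPolynomial.smul_eq_C_mul]
  have h2 := congrArg (fun D => D p) this
  simp only [Derivation.commutator_apply, Derivation.smul_apply,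
    MvPolynomial.smul_eq_C_mul] at h2
  rw [← h2]; ring

theorem vir_pderiv_comm {σ F : Type*} [Field F] (i j : σ) (p : MvPolynomial σ F) :
    pderiv i (pderiv j p) = pderiv j (pderiv i p) := by
  classical
  have := vir_comm (pderiv i) (pderiv j) 0 (0 : F) (fun l => by
    simp only [pderiv_X, Pi.single_apply]
    split_ifs <;> simp) p
  simpa using this

theorem vir_D_C {σ F : Type*} [Field F]
    (D : Derivation F (MvPolynomial σ F) (MvPolynomial σ F)) (r : F) (p : MvPolynomial σ F) :
    D (C r * p) = C r * D p := by
  rw [← MvPolynomial.smul_eq_C_mul, Derivation.map_smul, MvPolynomial.smul_eq_C_mul]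

/-- Quadratic part. -/
noncomputable def virQ {σ F ι : Type*} [Field F] (s : Finset ι) (u v : ι → σ) :
    MvPolynomial σ F →ₗ[F] MvPolynomial σ F :=
  ∑ i ∈ s, (pderiv (u i)).toLinearMap ∘ₗ (pderiv (v i)).toLinearMap

theorem virQ_apply {σ F ι : Type*} [Field F] (s : Finset ι) (u v : ι → σ)
    (p : MvPolynomial σ F) :
    virQ s u v p = ∑ i ∈ s, pderiv (u i) (pderiv (v i) p) := by
  simp [virQ, LinearMap.sum_apply]

theorem virQ_C {σ F ι : Type*} [Field F] (s : Finset ι) (u v : ι → σ) (r : F)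
    (p : MvPolynomial σ F) :
    virQ s u v (C r * p) = C r * virQ s u v p := by
  rw [← MvPolynomial.smul_eq_C_mul, map_smul, MvPolynomial.smul_eq_C_mul]

theorem virQ_X {σ F ι : Type*} [Field F] (s : Finset ι) (u v : ι → σ) (x : σ)
    (hu : ∀ i, u i ≠ x) (hv : ∀ i, v i ≠ x) (p : MvPolynomial σ F) :
    virQ s u v (X x * p) = X x * virQ s u v p := by
  classical
  simp only [virQ_apply, Finset.mul_sum]
  refine Finset.sum_congr rfl fun i _ => ?_
  simp only [Derivation.leibniz, pderiv_X_of_ne (hu i).symm, pderiv_X_of_ne (hv i).symm,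
    smul_eq_mul, mul_zero, add_zero]

theorem virQ_pderiv {σ F ι : Type*} [Field F] (s : Finset ι) (u v : ι → σ) (j : σ)
    (p : MvPolynomial σ F) :
    pderiv j (virQ s u v p) = virQ s u v (pderiv j p) := by
  simp only [virQ_apply, map_sum]
  refine Finset.sum_congr rfl fun i _ => ?_
  rw [vir_pderiv_comm j, vir_pderiv_comm j]

theorem virQ_E {σ F ι : Type*} [Field F] (s : Finset ι) (u v : ι → σ) (w : σ → F) (k : F)
    (E : Derivation F (MvPolynomial σ F) (MvPolynomial σ F))
    (hE : ∀ i p, E (pderiv i p) = pderiv i (E p) + C (- w i) * pderiv i p)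
    (h : ∀ i, w (u i) + w (v i) = k)
    (p : MvPolynomial σ F) :
    E (virQ s u v p) = virQ s u v (E p) + C (- k) * virQ s u v p := by
  simp only [virQ_apply, map_sum, Finset.mul_sum]
  rw [← Finset.sum_add_distrib]
  refine Finset.sum_congr rfl fun i _ => ?_
  rw [hE, hE, map_add, vir_D_C, ← h i]
  simp only [map_neg, map_add]
  ring

/-- Abstract form of the commutation relation. -/
theorem vir_abstract {σ F ι κ : Type*} [Field F] (E D : Derivation F (MvPolynomial σ F) (MvPolynomial σ F))
    (w : σ → F) (k : F) (x t1 tk t1k : σ)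
    (hE : ∀ i p, E (pderiv i p) = pderiv i (E p) + C (- w i) * pderiv i p)
    (hED : ∀ p, E (D p) = D (E p) + C (-k) * D p)
    (hD1 : ∀ p, pderiv t1 (D p) = D (pderiv t1 p) + C 1 * pderiv t1k p)
    (hEx : E (X x) = 0) (hDx : D (X x) = 0)
    (h1 : t1 ≠ x) (h2 : tk ≠ x) (h3 : t1k ≠ x) (hwk : w tk = k) (hw1k : w t1k = 1 + k)
    (s : Finset ι) (u v : ι → σ) (hu : ∀ i, u i ≠ x) (hv : ∀ i, v i ≠ x)
    (huv : ∀ i, w (u i) + w (v i) = k)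
    (s' : Finset κ) (u' v' : κ → σ) (hu' : ∀ i, u' i ≠ x) (hv' : ∀ i, v' i ≠ x)
    (huv' : ∀ i, w (u' i) + w (v' i) = k)
    (A B G M e1 e2 : F) (L0 Lk : MvPolynomial σ F → MvPolynomial σ F)
    (hL0 : ∀ p, L0 p = E p + C A * X x ^ 2 * p + C B * p - C G * pderiv t1 p)
    (hLk : ∀ p, Lk p = D p + C M * X x * pderiv tk p - C G * pderiv t1k p
      + C e1 * virQ s u v p + C e2 * virQ s' u' v' p)
    (p : MvPolynomial σ F) :
    L0 (Lk p) - Lk (L0 p) = (-k) • Lk p := by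
  have d1 : pderiv t1 (X x : MvPolynomial σ F) = 0 := pderiv_X_of_ne h1.symm
  have d2 : pderiv tk (X x : MvPolynomial σ F) = 0 := pderiv_X_of_ne h2.symm
  have d3 : pderiv t1k (X x : MvPolynomial σ F) = 0 := pderiv_X_of_ne h3.symm
  have q := virQ_X (F := F) s u v x hu hv
  have q' := virQ_X (F := F) s' u' v' x hu' hv'
  have qe := virQ_E s u v w k E hE huv
  have qe' := virQ_E s' u' v' w k E hE huv'
  simp only [hL0, hLk, pow_two, mul_assoc, map_add, map_sub, vir_D_C, virQ_C, q, q', qe, qe',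
    hE, hED, hD1, hwk, hw1k, virQ_pderiv, Derivation.leibniz, d1, d2, d3, hEx, hDx, smul_eq_mul,
    mul_zero, add_zero, MvPolynomial.smul_eq_C_mul, vir_pderiv_comm t1 tk,
    vir_pderiv_comm t1 t1k, MvPolynomial.derivation_C, map_neg, map_one]
  ring

end VirHelpers

/-- The Virasoro commutation relation `[L_0, L_k] = -k L_k` for every `k ≥ 1`, as
`K`-linear operators on `R = K[x, T_μ (μ ∈ 𝓘)]`. -/
theorem virasoro_commutation (m n : ℕ) (hm : 0 < m) (hn : 0 < n)
    (hmn : Nat.Coprime m n) (k : ℕ) (hk : 1 ≤ k)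
    (p : MvPolynomial (Unit ⊕ ↥(Idx m n)) (LaurentSeries ℂ)) :
    L0op m n hm hn (Lkop m n hm hn k hk p) - Lkop m n hm hn k hk (L0op m n hm hn p)
      = (-((k : ℚ) : LaurentSeries ℂ)) • Lkop m n hm hn k hk p := by
  classical
  have hcz : CharZero (LaurentSeries ℂ) :=
    charZero_of_injective_algebraMap (R := ℂ) (algebraMap ℂ (LaurentSeries ℂ)).injective
  have hg0 : Function.Injective (fun μ : ↥(Idx m n) => (Sum.inr μ : Unit ⊕ ↥(Idx m n))) :=
    Sum.inr_injective
  have hgk : Function.Injective (fun μ : ↥(Idx m n) => (Sum.inr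
      ⟨(μ : ℚ) + (k : ℚ), Idx.add_natCast_mem m n hm hn μ.2 k⟩ : Unit ⊕ ↥(Idx m n))) := by
    intro a b h
    have h1 := congrArg Subtype.val (Sum.inr_injective h)
    exact Subtype.ext (add_right_cancel h1)
  set c : ↥(Idx m n) → LaurentSeries ℂ := fun μ => ((μ : ℚ) : LaurentSeries ℂ) with hc
  set E := virDer c (fun μ => (Sum.inr μ : Unit ⊕ ↥(Idx m n))) _ hg0 with hEdef
  set D := virDer c (fun μ => (Sum.inr μ : Unit ⊕ ↥(Idx m n))) _ hgk with hDdef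
  have EX : ∀ μ, E (X (Sum.inr μ)) = C (c μ) * X (Sum.inr μ) := fun μ => virDer_X c _ _ hg0 μ
  have Ex : E (X (Sum.inl ())) = 0 := virDer_X_of_notMem c _ _ hg0 _ (by simp)
  have DX : ∀ μ : ↥(Idx m n), D (X (Sum.inr
      ⟨(μ : ℚ) + (k : ℚ), Idx.add_natCast_mem m n hm hn μ.2 k⟩)) = C (c μ) * X (Sum.inr μ) :=
    fun μ => virDer_X c _ _ hgk μ
  have Dx : D (X (Sum.inl ())) = 0 := virDer_X_of_notMem c _ _ hgk _ (by simp)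
  have DX0 : ∀ ν : ↥(Idx m n), (∀ μ : ↥(Idx m n), (μ : ℚ) + k ≠ ν) → D (X (Sum.inr ν)) = 0 := by
    intro ν h
    refine virDer_X_of_notMem c _ _ hgk _ fun μ h2 => h μ ?_
    exact congrArg Subtype.val (Sum.inr_injective h2)
  refine vir_abstract E D (Sum.elim (fun _ => 0) c) ((k : ℚ) : LaurentSeries ℂ) (Sum.inl ())
    (Sum.inr ⟨(1 : ℚ), Idx.natCast_mem m n hm Nat.one_pos⟩)
    (Sum.inr ⟨((k : ℚ)), Idx.natCast_mem m n hm hk⟩)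
    (Sum.inr ⟨((1 + k : ℕ) : ℚ), Idx.natCast_mem m n hm (by omega)⟩)
    ?_ ?_ ?_ Ex Dx (by simp) (by simp) (by simp) (by simp [hc]) (by simp [hc])
    (Finset.Ioo 0 (k * m)).attach
    (fun i => Sum.inr ⟨((i.1 : ℚ) / m), Idx.div_m_mem m n (Finset.mem_Ioo.mp i.2).1⟩)
    (fun i => Sum.inr ⟨(((k * m - i.1 : ℕ) : ℚ) / m),
            Idx.div_m_mem m n (by have := (Finset.mem_Ioo.mp i.2).2; omega)⟩)
    (by simp) (by simp) ?_
    (Finset.Ioo 0 (k * n)).attach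
    (fun i => Sum.inr ⟨((i.1 : ℚ) / n), Idx.div_n_mem m n (Finset.mem_Ioo.mp i.2).1⟩)
    (fun i => Sum.inr ⟨(((k * n - i.1 : ℕ) : ℚ) / n),
            Idx.div_n_mem m n (by have := (Finset.mem_Ioo.mp i.2).2; omega)⟩)
    (by simp) (by simp) ?_
    _ _ _ ((((m * n : ℚ) : LaurentSeries ℂ))⁻¹) (eps ^ 2 / (((2 * m : ℚ) : LaurentSeries ℂ)))
    (eps ^ 2 / (((2 * n : ℚ) : LaurentSeries ℂ))) (L0op m n hm hn) (Lkop m n hm hn k hk) (fun p => rfl) ?_ p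
  · intro i p
    refine vir_comm E (pderiv i) (pderiv i) _ ?_ p
    intro j
    rcases j with j | ν
    · rw [Ex]
      simp only [pderiv_X, Pi.single_apply]
      split_ifs with h
      · subst h; simp
      · simp
    · rw [EX, vir_D_C]
      simp only [pderiv_X, Pi.single_apply]
      split_ifs with h
      · subst h; simp
      · simp
  · intro p
    refine vir_comm E D D _ ?_ p
    intro j
    rcases j with j | ν
    · rw [Ex, Dx]; simp
    · by_cases h : ∃ μ : ↥(Idx m n), (μ : ℚ) + k = ν
      · obtain ⟨μ, h⟩ := h
        obtain rfl : (⟨(μ : ℚ) + (k : ℚ), Idx.add_natCast_mem m n hm hn μ.2 k⟩ : ↥(Idx m n)) = ν :=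
          Subtype.ext h
        rw [DX, EX, vir_D_C, vir_D_C, EX, DX]
        simp only [hc, Rat.cast_add, map_add, map_neg]
        ring
      · push Not at h
        rw [EX, vir_D_C, DX0 ν h]; simp
  · intro p
    refine vir_comm (pderiv _) D (pderiv _) _ ?_ p
    intro j
    rcases j with j | ν
    · rw [Dx]; simp [pderiv_X]
    · have hz : D (pderiv (Sum.inr ⟨(1 : ℚ), Idx.natCast_mem m n hm Nat.one_pos⟩)
          (X (Sum.inr ν))) = 0 := by
        simp only [pderiv_X, Pi.single_apply]
        split_ifs <;> simp
      rw [hz]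
      by_cases h : ∃ μ : ↥(Idx m n), (μ : ℚ) + k = ν
      · obtain ⟨μ, h⟩ := h
        obtain rfl : (⟨(μ : ℚ) + (k : ℚ), Idx.add_natCast_mem m n hm hn μ.2 k⟩ : ↥(Idx m n)) = ν :=
          Subtype.ext h
        rw [DX, vir_D_C]
        simp only [pderiv_X, Pi.single_apply, Sum.inr.injEq, Subtype.mk.injEq]
        by_cases h1 : (μ : ℚ) = 1
        · have e1 : μ = ⟨(1 : ℚ), Idx.natCast_mem m n hm Nat.one_pos⟩ := Subtype.ext h1
          rw [if_pos e1, if_pos (by rw [h1]; push_cast; ring)]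
          simp [hc, h1]
        · rw [if_neg (fun e => h1 (congrArg Subtype.val e)), if_neg]
          · simp
          · intro e
            apply h1
            push_cast at e
            linarith
      · push Not at h
        rw [DX0 ν h, pderiv_X_of_ne]
        · simp
        · intro e
          refine h ⟨(1 : ℚ), Idx.natCast_mem m n hm Nat.one_pos⟩ ?_
          rw [Sum.inr_injective e]
          push_cast
          ring
  · intro i
    have := (Finset.mem_Ioo.mp i.2).2
    simp only [Sum.elim_inr, hc]
    rw [← Rat.cast_add]
    congr 1
    rw [Nat.cast_sub this.le]
    push_cast
    field_simp
    ring
  · intro i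
    have := (Finset.mem_Ioo.mp i.2).2
    simp only [Sum.elim_inr, hc]
    rw [← Rat.cast_add]
    congr 1
    rw [Nat.cast_sub this.le]
    push_cast
    field_simp
    ring
  · intro p
    rw [virQ_apply, virQ_apply]
    rfl
end

section
/- There exists a unique formal power series $v\in\mathbb{Q}[[t_0,t_1,t_2,\dots]]$ with zero constant term satisfying the fixed-point equation $v=\sum_{i\ge0}t_i\,\frac{v^i}{i!}$. -/
/-- The right-hand side `∑_{i≥0} t_i v^i / i!` of the fixed-point equation, defined
coefficientwise.  When `v` has zero constant term, `t_i · v^i` has order at least `i+1`,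
so for a fixed monomial `d` only the terms with `i ≤ (total degree of d)` contribute,
and the truncated sum below computes the full sum. -/
noncomputable def genusZeroRHS (v : MvPowerSeries ℕ ℚ) : MvPowerSeries ℕ ℚ :=
  fun d => ∑ i ∈ Finset.range (d.sum (fun _ e => e) + 1),
    (Nat.factorial i : ℚ)⁻¹ * MvPowerSeries.coeff d (MvPowerSeries.X i * v ^ i)

def GZAgree (n : ℕ) (u v : MvPowerSeries ℕ ℚ) : Prop :=
  ∀ d : ℕ →₀ ℕ, d.degree < n → MvPowerSeries.coeff d u = MvPowerSeries.coeff d v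

theorem GZAgree.mul {n : ℕ} {u v u' v' : MvPowerSeries ℕ ℚ} (h : GZAgree n u v)
    (h' : GZAgree n u' v') : GZAgree n (u * u') (v * v') := by
  intro d hd
  rw [MvPowerSeries.coeff_mul, MvPowerSeries.coeff_mul]
  refine Finset.sum_congr rfl fun p hp => ?_
  rw [Finset.HasAntidiagonal.mem_antidiagonal] at hp
  have e : p.1.degree + p.2.degree = d.degree := by rw [← hp, map_add]
  rw [h p.1 (by omega), h' p.2 (by omega)]

theorem GZAgree.pow {n : ℕ} {u v : MvPowerSeries ℕ ℚ} (h : GZAgree n u v) (k : ℕ) :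
    GZAgree n (u ^ k) (v ^ k) := by
  induction k with
  | zero => intro d _; simp
  | succ k ih => rw [pow_succ, pow_succ]; exact ih.mul h

theorem GZAgree.rhs {n : ℕ} {u v : MvPowerSeries ℕ ℚ} (h : GZAgree n u v) :
    GZAgree (n + 1) (genusZeroRHS u) (genusZeroRHS v) := by
  intro d hd
  rw [MvPowerSeries.coeff_apply, MvPowerSeries.coeff_apply]
  unfold genusZeroRHS
  refine Finset.sum_congr rfl fun i _ => ?_
  congr 1
  rw [MvPowerSeries.X, MvPowerSeries.coeff_monomial_mul, MvPowerSeries.coeff_monomial_mul]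
  split_ifs with hle
  · congr 1
    apply h.pow i
    have e : (Finsupp.single i 1 + (d - Finsupp.single i 1)).degree = d.degree := by
      rw [add_tsub_cancel_of_le hle]
    rw [map_add, Finsupp.degree_single] at e
    omega
  · rfl

theorem GZAgree.eq {u v : MvPowerSeries ℕ ℚ} (h : ∀ n, GZAgree n u v) : u = v := by
  ext d
  exact h (d.degree + 1) d (by omega)

theorem gz_constantCoeff (v : MvPowerSeries ℕ ℚ) :
    MvPowerSeries.constantCoeff (genusZeroRHS v) = 0 := by
  rw [← MvPowerSeries.coeff_zero_eq_constantCoeff_apply, MvPowerSeries.coeff_apply]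
  unfold genusZeroRHS
  refine Finset.sum_eq_zero fun i _ => ?_
  rw [MvPowerSeries.coeff_zero_X_mul, mul_zero]

noncomputable def gzSeq : ℕ → MvPowerSeries ℕ ℚ
  | 0 => 0
  | n + 1 => genusZeroRHS (gzSeq n)

theorem gzSeq_agree (n k : ℕ) : GZAgree n (gzSeq n) (gzSeq (n + k)) := by
  induction n with
  | zero => intro d hd; omega
  | succ n ih =>
    rw [show n + 1 + k = (n + k) + 1 by omega]
    exact ih.rhs

noncomputable def gzSol : MvPowerSeries ℕ ℚ :=
  fun d => MvPowerSeries.coeff d (gzSeq (d.degree + 1))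

theorem gzSol_agree (n : ℕ) : GZAgree n gzSol (gzSeq n) := by
  intro d hd
  obtain ⟨k, rfl⟩ := Nat.exists_eq_add_of_lt hd
  rw [show d.degree + k + 1 = d.degree + 1 + k by omega]
  exact gzSeq_agree (d.degree + 1) k d (by omega)

theorem gzSol_eq : gzSol = genusZeroRHS gzSol := by
  ext d
  rw [gzSol_agree (d.degree + 1) d (by omega)]
  exact ((gzSol_agree d.degree).rhs d (by omega)).symm

/-- There exists a unique formal power series `v ∈ ℚ[[t_0, t_1, t_2, …]]` with zero
constant term satisfying the fixed-point equation `v = ∑_{i≥0} t_i v^i / i!`. -/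
theorem existsUnique_genus_zero_fixed_point :
    ∃! v : MvPowerSeries ℕ ℚ,
      MvPowerSeries.constantCoeff v = 0 ∧ v = genusZeroRHS v := by
  refine ⟨gzSol, ⟨?_, gzSol_eq⟩, ?_⟩
  · rw [gzSol_eq]
    exact gz_constantCoeff _
  · rintro w ⟨_, hw⟩
    apply GZAgree.eq
    intro n
    induction n with
    | zero => intro d hd; omega
    | succ n ih =>
      rw [hw, gzSol_eq]
      exact ih.rhs
end

section
/- The coefficient of $\epsilon^0$ in $D$ equals $\binom{m+n}{m}$, the coefficient of $\epsilon^1$ in $D$ vanishes, and the coefficient of $\epsilon^2$ in $D$ (an element of $A[[x]]$) equals $\binom{m+n}{m}\Big(\frac{mn(2mh-n)}{24}\,u''+\frac{m^3 n(h+1)}{24}\,(u')^2\Big)$, where $u'$ and $u''$ denote the first and second formal derivatives of $u$ with respect to $x$. -/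
open PowerSeries

variable (A : Type*) [CommRing A] [Algebra ℚ A]

/-- The image `u_c ∈ A[[x,ε]]` of `u ∈ A[[x]]` under the continuous `A`-algebra map
sending `x ↦ x + cε`, described coefficientwise: the coefficient of `x^i ε^j` in `u_c`
is `C(i+j, j) c^j` times the coefficient of `x^{i+j}` in `u`. -/
noncomputable def usub (c : ℚ) (u : PowerSeries A) : MvPowerSeries (Fin 2) A :=
  fun d => algebraMap ℚ A ((Nat.choose (d 0 + d 1) (d 1) : ℚ) * c ^ (d 1)) *
    PowerSeries.coeff (d 0 + d 1) u

/-- The formal exponential of a multivariate power series with zero constant term,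
`fexpA V = ∑_{n≥0} V^n / n!`, defined coefficientwise. -/
noncomputable def fexpA (V : MvPowerSeries (Fin 2) A) : MvPowerSeries (Fin 2) A :=
  fun d => ∑ n ∈ Finset.range (d 0 + d 1 + 1),
    MvPowerSeries.coeff d ((Nat.factorial n : ℚ)⁻¹ • V ^ n)

/-- The series `D = ∑_{0 ≤ α_1 ≤ ⋯ ≤ α_m ≤ n} exp(∑_{j=1}^m (u_{c_j} - u))` with
`c_j = α_j m - (j - 1/2) n`, the sum ranging over monotone tuples
`0 ≤ α_1 ≤ ⋯ ≤ α_m ≤ n`.  (Here `u` is regarded as an element of `A[[x,ε]]`, i.e. as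
`u_0 = usub A 0 u`.)  In operator language, `e^{mu}·D = Λ^{-n/2} res (Λ^m + e^u Λ^{-n})^{m+n}`. -/
noncomputable def Dser (m n : ℕ) (u : PowerSeries A) : MvPowerSeries (Fin 2) A :=
  ∑ α ∈ Finset.univ.filter
      (fun α : Fin m → Fin (n + 1) => ∀ i j : Fin m, i ≤ j → α i ≤ α j),
    fexpA A (∑ j : Fin m,
      (usub A ((α j : ℚ) * m - (((j : ℕ) : ℚ) + 1 / 2) * n) u - usub A 0 u))

/-- monotone tuples with values in `[0,n]`. -/
def MonoT (m n : ℕ) : Finset (Fin m → ℕ) :=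
  (Fintype.piFinset fun _ : Fin m => Finset.range (n + 1)).filter
    (fun α => ∀ i j : Fin m, i ≤ j → α i ≤ α j)

theorem mem_MonoT (m n : ℕ) (α : Fin m → ℕ) :
    α ∈ MonoT m n ↔ (∀ i, α i ≤ n) ∧ ∀ i j : Fin m, i ≤ j → α i ≤ α j := by
  simp [MonoT, Fintype.mem_piFinset, Nat.lt_succ_iff]

theorem MonoT_zero_left (n : ℕ) (f : (Fin 0 → ℕ) → ℚ) :
    ∑ α ∈ MonoT 0 n, f α = f ![] := by
  have : MonoT 0 n = {![]} := by
    ext α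
    rw [mem_MonoT]
    simp [Subsingleton.elim α ![]]
  rw [this, Finset.sum_singleton]

theorem MonoT_zero_right (m : ℕ) (f : (Fin m → ℕ) → ℚ) :
    ∑ α ∈ MonoT m 0, f α = f 0 := by
  have : MonoT m 0 = {0} := by
    ext α
    rw [mem_MonoT]
    simp only [Finset.mem_singleton, nonpos_iff_eq_zero]
    constructor
    · rintro ⟨h, -⟩
      funext i
      exact h i
    · rintro rfl
      simp
  rw [this, Finset.sum_singleton]

theorem MonoT_rec (m n : ℕ) (f : (Fin (m + 1) → ℕ) → ℚ) :
    ∑ α ∈ MonoT (m + 1) (n + 1), f α =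
      ∑ α ∈ MonoT (m + 1) n, f α +
      ∑ α ∈ MonoT m (n + 1), f (Fin.snoc (α := fun _ => ℕ) α (n + 1)) := by
  rw [← Finset.sum_filter_add_sum_filter_not (MonoT (m + 1) (n + 1))
    (fun α => α (Fin.last m) ≤ n)]
  congr 1
  · apply Finset.sum_congr _ (fun _ _ => rfl)
    ext α
    simp only [Finset.mem_filter, mem_MonoT]
    constructor
    · rintro ⟨⟨h1, h2⟩, h3⟩
      exact ⟨fun i => (h2 i _ (Fin.le_last i)).trans h3, h2⟩
    · rintro ⟨h1, h2⟩
      exact ⟨⟨fun i => (h1 i).trans (Nat.le_succ n), h2⟩, h1 _⟩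
  · symm
    apply Finset.sum_bij (fun α _ => Fin.snoc (α := fun _ => ℕ) α (n + 1))
    · intro α hα
      rw [mem_MonoT] at hα
      simp only [Finset.mem_filter, mem_MonoT]
      refine ⟨⟨?_, ?_⟩, by simp⟩
      · intro i
        refine Fin.lastCases ?_ (fun i => ?_) i
        · simp
        · simpa using hα.1 i
      · intro i j
        refine Fin.lastCases ?_ (fun j => ?_) j
        · intro _
          refine Fin.lastCases ?_ (fun i => ?_) i
          · simp
          · simpa using hα.1 i
        · refine Fin.lastCases ?_ (fun i => ?_) i
          · intro h
            exact absurd h (not_le.mpr (Fin.castSucc_lt_last j))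
          · intro h
            simpa using hα.2 i j (by simpa using h)
    · intro a _ b _ h
      have := congrArg (Fin.init (α := fun _ => ℕ)) h
      simpa [Fin.init_snoc] using this
    · intro α hα
      simp only [Finset.mem_filter, mem_MonoT] at hα
      refine ⟨Fin.init (α := fun _ => ℕ) α, ?_, ?_⟩
      · rw [mem_MonoT]
        exact ⟨fun i => hα.1.1 _, fun i j h => hα.1.2 _ _ (by simpa using h)⟩
      · have : n + 1 = α (Fin.last m) := by
          have := hα.1.1 (Fin.last m)
          have := hα.2
          omega
        rw [this]
        exact Fin.snoc_init_self (α := fun _ => ℕ) α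
    · intros
      rfl

theorem choose_rel (m n : ℕ) :
    ((m + 1 + n).choose (m + 1) : ℚ) = (n + 1) / (m + 1) * ((m + (n + 1)).choose m : ℚ) := by
  have h := Nat.choose_succ_right_eq (m + n + 1) m
  have h2 : m + n + 1 - m = n + 1 := by omega
  rw [h2] at h
  have h3 : ((m + n + 1).choose (m + 1) : ℚ) * (m + 1) = ((m + n + 1).choose m : ℚ) * (n + 1) := by
    exact_mod_cast h
  rw [show m + 1 + n = m + n + 1 by ring, show m + (n + 1) = m + n + 1 by ring]
  field_simp
  linarith

theorem choose_rel2 (m n : ℕ) :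
    ((m + 1 + (n + 1)).choose (m + 1) : ℚ) =
      (m + n + 2) / (m + 1) * ((m + (n + 1)).choose m : ℚ) := by
  have h : ((m + 1 + (n + 1)).choose (m + 1) : ℚ) =
    ((m + (n + 1)).choose m : ℚ) + ((m + 1 + n).choose (m + 1) : ℚ) := by
    rw [show m + 1 + (n + 1) = (m + (n + 1)) + 1 by ring, Nat.choose_succ_succ,
      show m + 1 + n = m + (n + 1) by ring]
    push_cast
    rfl
  rw [h, choose_rel]
  field_simp
  ring

/-- induction principle for the closed forms -/
theorem closed_form (T : ℕ → ℕ → ℚ) (p g : ℕ → ℕ → ℚ)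
    (h0 : ∀ n, T 0 n = p 0 n) (h1 : ∀ m, T m 0 = p m 0)
    (hrec : ∀ m n, T (m + 1) (n + 1) = T (m + 1) n + T m (n + 1) +
      ((m + (n + 1)).choose m : ℚ) * g m n)
    (hp : ∀ m n : ℕ, ((m : ℚ) + n + 2) / (m + 1) * p (m + 1) (n + 1) =
      (n + 1) / (m + 1) * p (m + 1) n + p m (n + 1) + g m n) (m n : ℕ) :
    T m n = ((m + n).choose m : ℚ) * p m n := by
  induction m generalizing n with
  | zero => simp [h0]
  | succ m ihm =>
    induction n with
    | zero => simp [h1]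
    | succ n ihn =>
      rw [hrec, ihn, ihm, choose_rel, choose_rel2]
      linear_combination (-((m + (n + 1)).choose m : ℚ)) * hp m n

theorem sum_one (m n : ℕ) : ∑ _α ∈ MonoT m n, (1 : ℚ) = ((m + n).choose m : ℚ) := by
  have := closed_form (fun m n => ∑ _α ∈ MonoT m n, (1 : ℚ)) (fun _ _ => 1) (fun _ _ => 0)
    (fun n => by simp only [MonoT_zero_left]) (fun n => by simp only [MonoT_zero_right])
    (fun m n => by simp only [MonoT_rec]; ring) (fun m n => by field_simp; ring) m n
  simpa using this

theorem sum_P (m n : ℕ) : ∑ α ∈ MonoT m n, ∑ j, (α j : ℚ)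
    = ((m + n).choose m : ℚ) * (m * n / 2) := by
  refine closed_form (fun m n => ∑ α ∈ MonoT m n, ∑ j, (α j : ℚ)) (fun m n => m * n / 2)
    (fun _ n => n + 1)
    (fun n => by simp [MonoT_zero_left]) (fun n => by simp [MonoT_zero_right])
    (fun m n => ?_) (fun m n => by push_cast; field_simp; ring) m n
  simp only [MonoT_rec, Fin.sum_univ_castSucc, Fin.snoc_castSucc, Fin.snoc_last,
    Finset.sum_add_distrib]
  have := sum_one m (n + 1)
  rw [← this, Finset.sum_mul]
  push_cast
  simp only [one_mul]
  ring

theorem sum_Q (m n : ℕ) : ∑ α ∈ MonoT m n, ∑ j, (α j : ℚ) ^ 2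
    = ((m + n).choose m : ℚ) * (m * n * (1 + 2 * n) / 6) := by
  refine closed_form (fun m n => ∑ α ∈ MonoT m n, ∑ j, (α j : ℚ) ^ 2)
    (fun m n => m * n * (1 + 2 * n) / 6)
    (fun _ n => (n + 1) ^ 2)
    (fun n => by simp [MonoT_zero_left]) (fun n => by simp [MonoT_zero_right])
    (fun m n => ?_) (fun m n => by push_cast; field_simp; ring) m n
  simp only [MonoT_rec, Fin.sum_univ_castSucc, Fin.snoc_castSucc, Fin.snoc_last,
    Finset.sum_add_distrib]
  have := sum_one m (n + 1)
  rw [← this, Finset.sum_mul]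
  push_cast
  simp only [one_mul]
  ring

theorem sum_R (m n : ℕ) : ∑ α ∈ MonoT m n, ∑ j : Fin m, (α j : ℚ) * (((j : ℕ) : ℚ) + 1 / 2)
    = ((m + n).choose m : ℚ) * (m * n * (4 * m - 1) / 12) := by
  refine closed_form
    (fun m n => ∑ α ∈ MonoT m n, ∑ j : Fin m, (α j : ℚ) * (((j : ℕ) : ℚ) + 1 / 2))
    (fun m n => m * n * (4 * m - 1) / 12)
    (fun m n => (n + 1) * (m + 1 / 2))
    (fun n => by simp [MonoT_zero_left]) (fun n => by simp [MonoT_zero_right])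
    (fun m n => ?_) (fun m n => by push_cast; field_simp; ring) m n
  simp only [MonoT_rec, Fin.sum_univ_castSucc, Fin.snoc_castSucc, Fin.snoc_last,
    Finset.sum_add_distrib, Fin.val_castSucc, Fin.val_last]
  have := sum_one m (n + 1)
  rw [← this, Finset.sum_mul]
  push_cast
  simp only [one_mul]
  ring

theorem sum_V (m n : ℕ) : ∑ α ∈ MonoT m n, (∑ j, (α j : ℚ)) ^ 2
    = ((m + n).choose m : ℚ) * (m * n * (m + n + 1) / 12 + m ^ 2 * n ^ 2 / 4) := by
  refine closed_form (fun m n => ∑ α ∈ MonoT m n, (∑ j, (α j : ℚ)) ^ 2)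
    (fun m n => m * n * (m + n + 1) / 12 + m ^ 2 * n ^ 2 / 4)
    (fun m n => (n + 1) ^ 2 + 2 * (n + 1) * (m * (n + 1) / 2))
    (fun n => by simp [MonoT_zero_left]) (fun n => by simp [MonoT_zero_right])
    (fun m n => ?_) (fun m n => by push_cast; field_simp; ring) m n
  have h1 : ∀ α : Fin m → ℕ, (∑ j, ((Fin.snoc (α := fun _ => ℕ) α (n + 1) j : ℕ) : ℚ)) ^ 2 =
      (∑ j, (α j : ℚ)) ^ 2 + 2 * (n + 1) * ∑ j, (α j : ℚ) + (n + 1) ^ 2 * 1 := by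
    intro α
    simp only [Fin.sum_univ_castSucc, Fin.snoc_castSucc, Fin.snoc_last]
    push_cast
    ring
  simp only [MonoT_rec, h1]
  rw [Finset.sum_add_distrib, Finset.sum_add_distrib, ← Finset.mul_sum, ← Finset.mul_sum,
    sum_one, sum_P]
  push_cast
  ring

theorem sum_S (m : ℕ) : ∑ j : Fin m, (((j : ℕ) : ℚ) + 1 / 2) ^ 2 = (m : ℚ) * (4 * (m : ℚ) ^ 2 - 1) / 12 := by
  induction m with
  | zero => simp
  | succ m ih =>
    simp only [Fin.sum_univ_castSucc, Fin.val_castSucc, Fin.val_last, ih]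
    push_cast
    ring

theorem sum_S1 (m : ℕ) : ∑ j : Fin m, (((j : ℕ) : ℚ) + 1 / 2) = (m : ℚ) ^ 2 / 2 := by
  induction m with
  | zero => simp
  | succ m ih =>
    simp only [Fin.sum_univ_castSucc, Fin.val_castSucc, Fin.val_last, ih]
    push_cast
    ring

theorem sum_c_eq (m n : ℕ) (α : Fin m → ℕ) :
    ∑ j : Fin m, ((α j : ℚ) * m - (((j : ℕ) : ℚ) + 1 / 2) * n) =
      m * (∑ j, (α j : ℚ)) - m ^ 2 * n / 2 := by
  rw [Finset.sum_sub_distrib, ← Finset.sum_mul, ← Finset.sum_mul, sum_S1]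
  ring

theorem mom1 (m n : ℕ) : ∑ α ∈ MonoT m n,
    ∑ j : Fin m, ((α j : ℚ) * m - (((j : ℕ) : ℚ) + 1 / 2) * n) = 0 := by
  have h : ∀ α : Fin m → ℕ, ∑ j : Fin m, ((α j : ℚ) * m - (((j : ℕ) : ℚ) + 1 / 2) * n) =
      m * (∑ j, (α j : ℚ)) - m ^ 2 * n / 2 * 1 := by
    intro α
    rw [sum_c_eq]
    ring
  simp only [h]
  rw [Finset.sum_sub_distrib, ← Finset.mul_sum, ← Finset.mul_sum, sum_one, sum_P]
  ring

theorem mom11 (m n : ℕ) : ∑ α ∈ MonoT m n,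
    (∑ j : Fin m, ((α j : ℚ) * m - (((j : ℕ) : ℚ) + 1 / 2) * n)) ^ 2 =
      ((m + n).choose m : ℚ) * (m ^ 3 * n * (m + n + 1) / 12) := by
  have h : ∀ α : Fin m → ℕ, (∑ j : Fin m, ((α j : ℚ) * m - (((j : ℕ) : ℚ) + 1 / 2) * n)) ^ 2 =
      m ^ 2 * (∑ j, (α j : ℚ)) ^ 2 - m ^ 3 * n * (∑ j, (α j : ℚ)) + m ^ 4 * n ^ 2 / 4 * 1 := by
    intro α
    rw [sum_c_eq]
    ring
  simp only [h]
  rw [Finset.sum_add_distrib, Finset.sum_sub_distrib, ← Finset.mul_sum, ← Finset.mul_sum,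
    ← Finset.mul_sum, sum_one, sum_P, sum_V]
  ring

theorem mom2 (m n : ℕ) : ∑ α ∈ MonoT m n,
    ∑ j : Fin m, ((α j : ℚ) * m - (((j : ℕ) : ℚ) + 1 / 2) * n) ^ 2 =
      ((m + n).choose m : ℚ) * (m * n * (2 * m * (m + n) - n) / 12) := by
  have h : ∀ α : Fin m → ℕ, ∑ j : Fin m, ((α j : ℚ) * m - (((j : ℕ) : ℚ) + 1 / 2) * n) ^ 2 =
      m ^ 2 * (∑ j, (α j : ℚ) ^ 2) - 2 * m * n * (∑ j : Fin m, (α j : ℚ) * (((j : ℕ) : ℚ) + 1 / 2))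
       + n ^ 2 * (m * (4 * m ^ 2 - 1) / 12) * 1 := by
    intro α
    rw [← sum_S, mul_one, Finset.mul_sum, Finset.mul_sum, Finset.mul_sum,
      ← Finset.sum_sub_distrib, ← Finset.sum_add_distrib]
    refine Finset.sum_congr rfl fun j _ => ?_
    ring
  simp only [h]
  rw [Finset.sum_add_distrib, Finset.sum_sub_distrib, ← Finset.mul_sum, ← Finset.mul_sum,
    ← Finset.mul_sum, sum_one, sum_Q, sum_R]
  ring

theorem sum_convert {M : Type*} [AddCommMonoid M] (m n : ℕ) (f : (Fin m → ℕ) → M) :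
    ∑ α ∈ Finset.univ.filter
      (fun α : Fin m → Fin (n + 1) => ∀ i j : Fin m, i ≤ j → α i ≤ α j), f (fun j => (α j : ℕ))
    = ∑ α ∈ MonoT m n, f α := by
  apply Finset.sum_bij (fun α _ => fun j => (α j : ℕ))
  · intro α hα
    rw [mem_MonoT]
    simp only [Finset.mem_filter, Finset.mem_univ, true_and] at hα
    exact ⟨fun i => Nat.lt_succ_iff.mp (α i).2, fun i j h => hα i j h⟩
  · intro a _ b _ h
    funext j
    exact Fin.ext (congrFun h j)
  · intro α hα
    rw [mem_MonoT] at hα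
    refine ⟨fun j => ⟨α j, Nat.lt_succ_iff.mpr (hα.1 j)⟩, ?_, rfl⟩
    simp only [Finset.mem_filter, Finset.mem_univ, true_and]
    intro i j h
    exact hα.2 i j h
  · intros
    rfl

/-- shifted quotient by `ε`. -/
noncomputable def Wq (V : MvPowerSeries (Fin 2) A) : MvPowerSeries (Fin 2) A :=
  fun d => MvPowerSeries.coeff (d + Finsupp.single 1 1) V

theorem eq_X_mul_Wq (V : MvPowerSeries (Fin 2) A)
    (hV : ∀ i, MvPowerSeries.coeff (Finsupp.single 0 i) V = 0) :
    V = MvPowerSeries.X 1 * Wq A V := by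
  ext d
  rw [MvPowerSeries.X, MvPowerSeries.coeff_monomial_mul]
  split_ifs with h
  · rw [one_mul]
    change _ = MvPowerSeries.coeff (d - Finsupp.single 1 1 + Finsupp.single 1 1) V
    rw [tsub_add_cancel_of_le h]
  · have h1 : d 1 = 0 := by
      by_contra h1
      apply h
      rw [Finsupp.single_le_iff]
      omega
    have : d = Finsupp.single 0 (d 0) := by
      ext k
      fin_cases k <;> simp [h1]
    rw [this, hV]

theorem coeff_pow_V (V : MvPowerSeries (Fin 2) A)
    (hV : ∀ i, MvPowerSeries.coeff (Finsupp.single 0 i) V = 0) (i k l : ℕ) :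
    MvPowerSeries.coeff (Finsupp.single 0 i + Finsupp.single 1 k) (V ^ l) =
      if l ≤ k then
        MvPowerSeries.coeff (Finsupp.single 0 i + Finsupp.single 1 (k - l)) ((Wq A V) ^ l)
      else 0 := by
  conv_lhs => rw [eq_X_mul_Wq A V hV, mul_pow, MvPowerSeries.X_pow_eq,
    MvPowerSeries.coeff_monomial_mul]
  have h1 : Finsupp.single (1 : Fin 2) l ≤ Finsupp.single 0 i + Finsupp.single 1 k ↔ l ≤ k := by
    rw [Finsupp.single_le_iff]
    simp
  simp only [h1, one_mul]
  split_ifs with h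
  · congr 2
    ext j
    fin_cases j <;> simp
  · rfl

theorem coeff_fexpA (V : MvPowerSeries (Fin 2) A)
    (hV : ∀ i, MvPowerSeries.coeff (Finsupp.single 0 i) V = 0) (i k : ℕ) :
    MvPowerSeries.coeff (Finsupp.single 0 i + Finsupp.single 1 k) (fexpA A V) =
      ∑ l ∈ Finset.range (k + 1), ((Nat.factorial l : ℚ)⁻¹ •
        MvPowerSeries.coeff (Finsupp.single 0 i + Finsupp.single 1 (k - l)) ((Wq A V) ^ l)) := by
  change ∑ n ∈ Finset.range _, MvPowerSeries.coeff _ ((Nat.factorial n : ℚ)⁻¹ • V ^ n) = _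
  have e : (Finsupp.single (0 : Fin 2) i + Finsupp.single 1 k : Fin 2 →₀ ℕ) 0 +
    (Finsupp.single (0 : Fin 2) i + Finsupp.single 1 k : Fin 2 →₀ ℕ) 1 + 1 = i + k + 1 := by simp
  rw [e]
  have hsub : Finset.range (k + 1) ⊆ Finset.range (i + k + 1) := by
    intro a
    simp only [Finset.mem_range]
    omega
  have hc : ∀ l, MvPowerSeries.coeff (Finsupp.single (0 : Fin 2) i + Finsupp.single 1 k)
      ((Nat.factorial l : ℚ)⁻¹ • V ^ l) = (Nat.factorial l : ℚ)⁻¹ •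
      MvPowerSeries.coeff (Finsupp.single (0 : Fin 2) i + Finsupp.single 1 k) (V ^ l) :=
    fun l => rfl
  rw [← Finset.sum_subset hsub]
  · refine Finset.sum_congr rfl fun l hl => ?_
    rw [hc, coeff_pow_V A V hV, if_pos (by simp at hl; omega)]
  · intro l _ hl
    rw [hc, coeff_pow_V A V hV, if_neg (by simp at hl; omega), smul_zero]

/-- the exponent -/
noncomputable def Vexp (m n : ℕ) (u : PowerSeries A) (α : Fin m → ℕ) : MvPowerSeries (Fin 2) A :=
  ∑ j : Fin m, (usub A ((α j : ℚ) * m - (((j : ℕ) : ℚ) + 1 / 2) * n) u - usub A 0 u)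

theorem coeff_usub (c : ℚ) (u : PowerSeries A) (i k : ℕ) :
    MvPowerSeries.coeff (Finsupp.single 0 i + Finsupp.single 1 k) (usub A c u) =
    algebraMap ℚ A ((Nat.choose (i + k) k : ℚ) * c ^ k) * PowerSeries.coeff (i + k) u := by
  change algebraMap ℚ A _ * PowerSeries.coeff _ u = _
  simp

theorem coeff_Vexp (m n : ℕ) (u : PowerSeries A) (α : Fin m → ℕ) (i k : ℕ) (hk : k ≠ 0) :
    MvPowerSeries.coeff (Finsupp.single 0 i + Finsupp.single 1 k) (Vexp A m n u α) =
    algebraMap ℚ A (∑ j : Fin m, ((α j : ℚ) * m - (((j : ℕ) : ℚ) + 1 / 2) * n) ^ k) *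
      (algebraMap ℚ A (Nat.choose (i + k) k : ℚ) * PowerSeries.coeff (i + k) u) := by
  rw [Vexp, map_sum, map_sum, Finset.sum_mul]
  refine Finset.sum_congr rfl fun j _ => ?_
  rw [map_sub, coeff_usub, coeff_usub, zero_pow hk, mul_zero, map_zero, zero_mul, sub_zero,
    map_mul]
  ring

theorem coeff_Vexp_zero (m n : ℕ) (u : PowerSeries A) (α : Fin m → ℕ) (i : ℕ) :
    MvPowerSeries.coeff (Finsupp.single 0 i) (Vexp A m n u α) = 0 := by
  have : Finsupp.single (0 : Fin 2) i = Finsupp.single 0 i + Finsupp.single 1 0 := by simp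
  rw [this, Vexp, map_sum]
  refine Finset.sum_eq_zero fun j _ => ?_
  rw [map_sub, coeff_usub, coeff_usub]
  simp

theorem coeff_Wq (V : MvPowerSeries (Fin 2) A) (i k : ℕ) :
    MvPowerSeries.coeff (Finsupp.single 0 i + Finsupp.single 1 k) (Wq A V) =
    MvPowerSeries.coeff (Finsupp.single 0 i + Finsupp.single 1 (k + 1)) V := by
  change MvPowerSeries.coeff (Finsupp.single 0 i + Finsupp.single 1 k + Finsupp.single 1 1) V = _
  rw [add_assoc, ← Finsupp.single_add]

theorem coeff_one_eps (i k : ℕ) :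
    MvPowerSeries.coeff (Finsupp.single (0 : Fin 2) i + Finsupp.single 1 k)
      (1 : MvPowerSeries (Fin 2) A) = if i = 0 ∧ k = 0 then 1 else 0 := by
  rw [MvPowerSeries.coeff_one]
  congr 1
  rw [eq_iff_iff]
  constructor
  · intro h
    have h0 := DFunLike.congr_fun h 0
    have h1 := DFunLike.congr_fun h 1
    simp at h0 h1
    exact ⟨h0, h1⟩
  · rintro ⟨rfl, rfl⟩
    simp

theorem coeff_sq_zero (W : MvPowerSeries (Fin 2) A) (i : ℕ) :
    MvPowerSeries.coeff (Finsupp.single (0 : Fin 2) i + Finsupp.single 1 0) (W ^ 2) =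
    ∑ p ∈ Finset.HasAntidiagonal.antidiagonal i,
      MvPowerSeries.coeff (Finsupp.single (0 : Fin 2) p.1 + Finsupp.single 1 0) W *
      MvPowerSeries.coeff (Finsupp.single (0 : Fin 2) p.2 + Finsupp.single 1 0) W := by
  simp only [Finsupp.single_zero, add_zero]
  rw [pow_two, MvPowerSeries.coeff_mul, Finsupp.antidiagonal_single, Finset.sum_map]
  rfl

theorem Dser_eq (m n : ℕ) (u : PowerSeries A) :
    Dser A m n u = ∑ α ∈ MonoT m n, fexpA A (Vexp A m n u α) :=
  sum_convert m n (fun α => fexpA A (Vexp A m n u α))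

theorem coeff_dF (f : PowerSeries A) (i : ℕ) : PowerSeries.coeff i (derivativeFun f) =
    PowerSeries.coeff (i + 1) f * (i + 1) :=
  PowerSeries.coeff_derivative f i

theorem coeff_deriv (u : PowerSeries A) (i : ℕ) :
    algebraMap ℚ A (Nat.choose (i + 1) 1 : ℚ) * PowerSeries.coeff (i + 1) u =
      PowerSeries.coeff i (derivativeFun u) := by
  rw [coeff_dF]
  simp
  ring

theorem coeff_deriv2 (u : PowerSeries A) (i : ℕ) :
    algebraMap ℚ A (Nat.choose (i + 2) 2 : ℚ) * PowerSeries.coeff (i + 2) u =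
      algebraMap ℚ A (1 / 2) * PowerSeries.coeff i (derivativeFun (derivativeFun u)) := by
  rw [coeff_dF, coeff_dF]
  have h : (Nat.choose (i + 2) 2 : ℚ) = 1 / 2 * (((i + 1 : ℕ) : ℚ) + 1) * ((i : ℚ) + 1) := by
    rw [Nat.cast_choose_two]
    push_cast
    ring
  rw [h]
  simp only [map_mul, map_add, map_natCast, map_one]
  ring

theorem D_coeff0 (m n : ℕ) (u : PowerSeries A) (α : Fin m → ℕ) (i : ℕ) :
    MvPowerSeries.coeff (Finsupp.single 0 i) (fexpA A (Vexp A m n u α)) =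
      algebraMap ℚ A 1 * (if i = 0 then 1 else 0) := by
  have h := coeff_fexpA A _ (coeff_Vexp_zero A m n u α) i 0
  simp only [Finsupp.single_zero, add_zero] at h
  rw [h]
  have h1 := coeff_one_eps A i 0
  simp only [Finsupp.single_zero, add_zero, and_true] at h1
  simp [h1]

theorem D_coeff1 (m n : ℕ) (u : PowerSeries A) (α : Fin m → ℕ) (i : ℕ) :
    MvPowerSeries.coeff (Finsupp.single 0 i + Finsupp.single 1 1) (fexpA A (Vexp A m n u α)) =
      algebraMap ℚ A (∑ j : Fin m, ((α j : ℚ) * m - (((j : ℕ) : ℚ) + 1 / 2) * n)) *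
       PowerSeries.coeff i (derivativeFun u) := by
  rw [coeff_fexpA A _ (coeff_Vexp_zero A m n u α) i 1, Finset.sum_range_succ,
    Finset.sum_range_one, pow_zero, pow_one, coeff_one_eps, coeff_Wq, coeff_Vexp _ _ _ _ _ _ _
    (by norm_num)]
  rw [Nat.sub_self, Nat.zero_add, coeff_deriv]
  simp

theorem D_coeff2 (m n : ℕ) (u : PowerSeries A) (α : Fin m → ℕ) (i : ℕ) :
    MvPowerSeries.coeff (Finsupp.single 0 i + Finsupp.single 1 2) (fexpA A (Vexp A m n u α)) =
      algebraMap ℚ A (∑ j : Fin m, ((α j : ℚ) * m - (((j : ℕ) : ℚ) + 1 / 2) * n) ^ 2) *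
       (algebraMap ℚ A (1 / 2) * PowerSeries.coeff i (derivativeFun (derivativeFun u))) +
      algebraMap ℚ A ((∑ j : Fin m, ((α j : ℚ) * m - (((j : ℕ) : ℚ) + 1 / 2) * n)) ^ 2) *
       (algebraMap ℚ A (1 / 2) * PowerSeries.coeff i (derivativeFun u ^ 2)) := by
  rw [coeff_fexpA A _ (coeff_Vexp_zero A m n u α) i 2, Finset.sum_range_succ,
    Finset.sum_range_succ,
    Finset.sum_range_one, pow_zero, pow_one, coeff_one_eps, coeff_Wq, coeff_Vexp _ _ _ _ _ _ _
    (by norm_num)]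
  rw [Nat.sub_self, coeff_sq_zero, show 2 - 1 + 1 = 2 by rfl, coeff_deriv2]
  simp only [coeff_Wq, Nat.zero_add]
  simp only [coeff_Vexp A m n u α _ 1 one_ne_zero, coeff_deriv, pow_one]
  rw [pow_two (derivativeFun u), PowerSeries.coeff_mul, if_neg (by simp), smul_zero, zero_add,
    Nat.factorial_one, Nat.cast_one, inv_one, one_smul, Algebra.smul_def, Finset.mul_sum,
    Finset.mul_sum, Finset.mul_sum]
  congr 1
  refine Finset.sum_congr rfl fun p _ => ?_
  rw [map_pow, show ((Nat.factorial 2 : ℕ) : ℚ)⁻¹ = 1 / 2 by norm_num [Nat.factorial]]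
  ring

/-- The coefficient of `ε^0` in `D` equals `C(m+n, m)`, the coefficient of `ε^1` in `D`
vanishes, and the coefficient of `ε^2` in `D` equals
`C(m+n,m)·( mn(2mh-n)/24 · u'' + m³n(h+1)/24 · (u')² )`, where `h = m+n`. -/
theorem Dser_low_order_coefficients (m n : ℕ) (hm : 0 < m) (hn : 0 < n)
    (hmn : Nat.Coprime m n) (u : PowerSeries A) :
    (∀ i : ℕ, MvPowerSeries.coeff (Finsupp.single 0 i) (Dser A m n u)
        = if i = 0 then ((Nat.choose (m + n) m : ℕ) : A) else 0) ∧
    (∀ i : ℕ, MvPowerSeries.coeff (Finsupp.single 0 i + Finsupp.single 1 1)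
        (Dser A m n u) = 0) ∧
    (∀ i : ℕ, MvPowerSeries.coeff (Finsupp.single 0 i + Finsupp.single 1 2)
        (Dser A m n u)
      = ((Nat.choose (m + n) m : ℕ) : A) *
          PowerSeries.coeff i
            ((algebraMap ℚ A ((m : ℚ) * n * (2 * m * ((m : ℚ) + n) - n) / 24)) •
                derivativeFun (derivativeFun u)
              + (algebraMap ℚ A ((m : ℚ) ^ 3 * n * (((m : ℚ) + n) + 1) / 24)) •
                  (derivativeFun u) ^ 2)) := by
  have hC : ((Nat.choose (m + n) m : ℕ) : A) = algebraMap ℚ A ((m + n).choose m : ℚ) := by simp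
  refine ⟨fun i => ?_, fun i => ?_, fun i => ?_⟩
  · rw [Dser_eq, map_sum]
    simp only [D_coeff0]
    rw [← Finset.sum_mul, ← map_sum, sum_one, hC]
    simp
  · rw [Dser_eq, map_sum]
    simp only [D_coeff1]
    rw [← Finset.sum_mul, ← map_sum, mom1, map_zero, zero_mul]
  · rw [Dser_eq, map_sum]
    simp only [D_coeff2]
    rw [Finset.sum_add_distrib, ← Finset.sum_mul, ← Finset.sum_mul, ← map_sum, ← map_sum,
      mom2, mom11, hC, map_add, PowerSeries.coeff_smul, PowerSeries.coeff_smul]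
    rw [show (m : ℚ) * n * (2 * m * ((m : ℚ) + n) - n) / 24 =
      (m : ℚ) * n * (2 * m * ((m : ℚ) + n) - n) / 12 * (1 / 2) by ring,
      show (m : ℚ) ^ 3 * n * (((m : ℚ) + n) + 1) / 24 =
      (m : ℚ) ^ 3 * n * (((m : ℚ) + n) + 1) / 12 * (1 / 2) by ring]
    simp only [map_mul (algebraMap ℚ A) _ (1 / 2), map_mul (algebraMap ℚ A) ((m + n).choose m : ℚ),
      smul_eq_mul]
    ring
end
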